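/- arXiv:2306.07445 — 6 statements merged into one kernel-verified Lean document; each statement's English description precedes it below -/
import Mathlib

section
/- Every continuous piecewise linear (CPWL) function f : ℝ^d → ℝ is a ReLU neural network function of depth ⌈log₂(d+1)⌉ + 1 with some choice of hidden widths (the other direction of Proposition 2.1). -/
/-!
The proof writes a CPWL function `f` as a linear combination of maxima of at most `d + 1` affine
functions, and observes that a maximum of at most `2 ^ k` affine functions is computed by a network
with `k` hidden layers (`IsMaxOf.mem_netSpace`), pairing terms via `max a b = σ (a - b) + b`.

*Lattice representation.* Let `g i` be the affine functions from which `f` selects. For all points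
`x, y` some `g i` satisfies `f y ≤ g i y` and `g i x ≤ f x`; this is a statement about the line
through `x` and `y` (`exists_crossing`). Hence `f` is the maximum over `y` of the minimum of those
`g i` with `f y ≤ g i y`. Only finitely many sets of indices occur, and differences of finite maxima
of affine functions are closed under `⊔` and `⊓`, so `f` is such a difference
(`isDiffMax_of_isCPWL`).

*Reduction of the number of terms.* Given more than `d + 1` affine functions, their linear parts are
affinely dependent: some coefficients `c`, not all zero and of sum zero, make `∑ c g * g` a
constant, without loss of generality nonnegative. With `N = {g | c g < 0}` and `P` the
complement, at every point some member of `N` is at most some member of `P`. Therefore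
`∑ (-1)^|S| max (P ∪ S) = 0`, summed over `S ⊆ N` (`alternating_sum_eq_zero`), which expresses the
maximum of all functions, the term `S = N`, through maxima of fewer functions. Induction on the
number of functions gives `mem_span_of_isMaxOf`.
-/

noncomputable section

/-- A ReLU neural network of depth `L` on input dimension `d`:
affine layers `A_l : ℝ^{width (l-1)} → ℝ^{width l}` with `width 0 = d`, `width L = 1`,
evaluated as `A_L ∘ σ ∘ A_{L-1} ∘ ⋯ ∘ σ ∘ A_1` where `σ` is the componentwise ReLU. -/
structure ReLUNet (d L : ℕ) where
  hL1 : 1 ≤ L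
  width : ℕ → ℕ
  h0 : width 0 = d
  hL : width L = 1
  W : (l : ℕ) → Matrix (Fin (width (l + 1))) (Fin (width l)) ℝ
  b : (l : ℕ) → Fin (width (l + 1)) → ℝ

namespace ReLUNet

variable {d L : ℕ}

/-- The pre-activation output of layer `k + 1`, i.e. `A_{k+1} ∘ σ ∘ A_k ∘ ⋯ ∘ σ ∘ A_1 (x)`. -/
def preact (net : ReLUNet d L) (x : Fin d → ℝ) : (k : ℕ) → Fin (net.width (k + 1)) → ℝ
  | 0 => fun i => (∑ j, net.W 0 i j * x (Fin.cast net.h0 j)) + net.b 0 i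
  | k + 1 => fun i => (∑ j, net.W (k + 1) i j * max (net.preact x k j) 0) + net.b (k + 1) i

/-- The scalar output `A_L ∘ σ ∘ A_{L-1} ∘ ⋯ ∘ σ ∘ A_1 (x)` of the network. -/
def eval (net : ReLUNet d L) (x : Fin d → ℝ) : ℝ :=
  net.preact x (L - 1)
    (Fin.cast (show (1 : ℕ) = net.width (L - 1 + 1) by
      rw [Nat.sub_add_cancel net.hL1, net.hL]) 0)

end ReLUNet

/-- `f : ℝ^d → ℝ` is a ReLU neural network function of depth `L` with hidden widths
`ns 1, …, ns (L-1)`. -/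
def IsReLUNet (d L : ℕ) (ns : ℕ → ℕ) (f : (Fin d → ℝ) → ℝ) : Prop :=
  ∃ net : ReLUNet d L, (∀ l, 1 ≤ l → l ≤ L - 1 → net.width l = ns l) ∧
    ∀ x, net.eval x = f x

/-- `f : ℝ^d → ℝ` is continuous piecewise linear (CPWL): `f` is continuous and there are
finitely many affine functions `g₁, …, g_k` such that at every point `f` agrees with some `gᵢ`. -/
def IsCPWL (d : ℕ) (f : (Fin d → ℝ) → ℝ) : Prop :=
  Continuous f ∧ ∃ (k : ℕ) (g : Fin k → ((Fin d → ℝ) →ᵃ[ℝ] ℝ)), ∀ x, ∃ i, f x = g i x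

namespace CPWL

open Filter Topology

variable {d : ℕ}

/-- `h` is the pointwise maximum of the finite set `s` of affine functions. In particular `s` is
nonempty. -/
def IsMaxOf (s : Finset ((Fin d → ℝ) →ᵃ[ℝ] ℝ)) (h : (Fin d → ℝ) → ℝ) : Prop :=
  ∀ x, (∃ g ∈ s, h x = g x) ∧ ∀ g ∈ s, g x ≤ h x

/-- Differences of two finite maxima of affine functions. -/
def IsDiffMax (f : (Fin d → ℝ) → ℝ) : Prop :=
  ∃ s t p q, IsMaxOf s p ∧ IsMaxOf t q ∧ f = p - q

/-! ### Lattice representation of CPWL functions -/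

/-- If a continuous function on the line vanishes at `0` and `1` and is everywhere equal to one of
finitely many affine functions, then one of these is nonnegative at `0` and nonpositive at `1`.
Otherwise every affine function that is active at a zero in `[0, 1]` is strictly increasing, so `φ`
crosses zero upwards at each of its zeros; it is then nonnegative on `[0, 1]`, but negative just
before `1`. -/
lemma exists_crossing {k : ℕ} (a b : Fin k → ℝ) (φ : ℝ → ℝ) (hφ : Continuous φ)
    (hsel : ∀ t, ∃ i, φ t = a i + b i * t) (h0 : φ 0 = 0) (h1 : φ 1 = 0) :
    ∃ i, 0 ≤ a i ∧ a i + b i ≤ 0 := by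
  by_contra! hcon
  have hloc : ∀ s ∈ Set.Icc (0 : ℝ) 1, φ s = 0 →
      ∀ᶠ t in 𝓝 s, (s < t → 0 < φ t) ∧ (t < s → φ t < 0) := by
    intro s hs hz
    -- near `s` only those affine functions can be active that are active at `s`
    have hev : ∀ᶠ t in 𝓝 s, ∀ i, φ t = a i + b i * t → φ s = a i + b i * s := by
      rw [eventually_all]
      intro i
      by_cases hi : φ s = a i + b i * s
      · exact Eventually.of_forall fun _ _ => hi
      · have : ∀ᶠ t in 𝓝 s, φ t ≠ a i + b i * t :=
          (isOpen_ne_fun hφ (by fun_prop)).mem_nhds hi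
        exact this.mono fun t ht h => absurd h ht
    filter_upwards [hev] with t ht
    obtain ⟨i, hi⟩ := hsel t
    have hsi := ht i hi
    have hb : 0 < b i := by
      by_contra! hb
      have h2 : 0 ≤ a i := by nlinarith [hs.1]
      have h3 := hcon i h2
      nlinarith [hs.2]
    constructor
    · intro hst
      nlinarith [mul_pos hb (sub_pos.2 hst)]
    · intro hst
      nlinarith [mul_pos hb (sub_pos.2 hst)]
  have hnonneg : Set.Icc (0 : ℝ) 1 ⊆ {t | 0 ≤ φ t} := by
    apply IsClosed.Icc_subset_of_forall_mem_nhdsWithin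
    · exact (isClosed_le continuous_const hφ).inter isClosed_Icc
    · exact h0.ge
    · rintro s ⟨hs, hs'⟩
      rcases (show 0 ≤ φ s from hs).eq_or_lt with h | h
      · filter_upwards [nhdsWithin_le_nhds (hloc s ⟨hs'.1, hs'.2.le⟩ h.symm),
          self_mem_nhdsWithin] with t ht hst
        exact (ht.1 hst).le
      · have hpos : ∀ᶠ t in 𝓝 s, 0 < φ t := (isOpen_lt continuous_const hφ).mem_nhds h
        filter_upwards [nhdsWithin_le_nhds hpos] with t ht
        exact ht.le
  have h2 : ∀ᶠ t in 𝓝[<] (1 : ℝ), φ t < 0 ∧ 0 < t ∧ t < 1 := by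
    filter_upwards [nhdsWithin_le_nhds (hloc 1 (by simp) h1), self_mem_nhdsWithin,
      nhdsWithin_le_nhds (lt_mem_nhds (zero_lt_one' ℝ))] with t ht ht1 ht0
    exact ⟨ht.2 ht1, ht0, ht1⟩
  obtain ⟨t, ht, ht0, ht1⟩ := h2.exists
  exact absurd (hnonneg ⟨ht0.le, ht1.le⟩ : 0 ≤ φ t) (not_le.2 ht)

lemma exists_separating {k : ℕ} (f : (Fin d → ℝ) → ℝ) (hf : Continuous f)
    (g : Fin k → ((Fin d → ℝ) →ᵃ[ℝ] ℝ)) (hg : ∀ x, ∃ i, f x = g i x) (x y : Fin d → ℝ) :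
    ∃ i, f y ≤ g i y ∧ g i x ≤ f x := by
  -- restrict to the line through `y` and `x` and subtract the chord of `f`
  obtain ⟨i, h1, h2⟩ := exists_crossing (fun i => g i y - f y)
    (fun i => (g i x - g i y) - (f x - f y))
    (fun t => f (AffineMap.lineMap y x t) - f y - (f x - f y) * t)
    (by
      have : Continuous fun t : ℝ => (AffineMap.lineMap y x t : Fin d → ℝ) :=
        AffineMap.lineMap_continuous
      fun_prop)
    (by
      intro t
      obtain ⟨i, hi⟩ := hg (AffineMap.lineMap y x t)
      refine ⟨i, ?_⟩
      rw [hi, AffineMap.apply_lineMap, AffineMap.lineMap_apply_ring']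
      ring)
    (by simp) (by simp)
  exact ⟨i, by linarith, by linarith⟩

lemma IsMaxOf.add {s t : Finset ((Fin d → ℝ) →ᵃ[ℝ] ℝ)} {p q : (Fin d → ℝ) → ℝ}
    (hp : IsMaxOf s p) (hq : IsMaxOf t q) : ∃ u, IsMaxOf u (p + q) := by
  classical
  refine ⟨Finset.image₂ (· + ·) s t, fun x => ⟨?_, ?_⟩⟩
  · obtain ⟨g, hg, hgx⟩ := (hp x).1
    obtain ⟨g', hg', hgx'⟩ := (hq x).1
    exact ⟨g + g', Finset.mem_image₂_of_mem hg hg', by simp [hgx, hgx']⟩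
  · intro r hr
    obtain ⟨g, hg, g', hg', rfl⟩ := Finset.mem_image₂.1 hr
    exact add_le_add ((hp x).2 g hg) ((hq x).2 g' hg')

open Classical in
lemma IsMaxOf.sup {s t : Finset ((Fin d → ℝ) →ᵃ[ℝ] ℝ)} {p q : (Fin d → ℝ) → ℝ}
    (hp : IsMaxOf s p) (hq : IsMaxOf t q) : IsMaxOf (s ∪ t) (p ⊔ q) := by
  intro x
  constructor
  · rcases le_total (p x) (q x) with h | h
    · obtain ⟨g, hg, hgx⟩ := (hq x).1
      exact ⟨g, Finset.mem_union_right _ hg, by simp [h, ← hgx]⟩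
    · obtain ⟨g, hg, hgx⟩ := (hp x).1
      exact ⟨g, Finset.mem_union_left _ hg, by simp [h, ← hgx]⟩
  · intro g hg
    rcases Finset.mem_union.1 hg with h | h
    · exact ((hp x).2 g h).trans le_sup_left
    · exact ((hq x).2 g h).trans le_sup_right

lemma isMaxOf_singleton (g : (Fin d → ℝ) →ᵃ[ℝ] ℝ) : IsMaxOf {g} g := by
  intro x
  simp

lemma IsMaxOf.unique {s : Finset ((Fin d → ℝ) →ᵃ[ℝ] ℝ)} {p q : (Fin d → ℝ) → ℝ}
    (hp : IsMaxOf s p) (hq : IsMaxOf s q) : p = q := by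
  funext x
  obtain ⟨g, hg, hgx⟩ := (hp x).1
  obtain ⟨g', hg', hgx'⟩ := (hq x).1
  exact le_antisymm (hgx ▸ (hq x).2 g hg) (hgx' ▸ (hp x).2 g' hg')

lemma IsDiffMax.affine (g : (Fin d → ℝ) →ᵃ[ℝ] ℝ) : IsDiffMax (g : (Fin d → ℝ) → ℝ) :=
  ⟨{g}, {0}, g, (0 : (Fin d → ℝ) →ᵃ[ℝ] ℝ), isMaxOf_singleton g, isMaxOf_singleton 0, by
    funext x; simp⟩

lemma IsDiffMax.neg {f : (Fin d → ℝ) → ℝ} (hf : IsDiffMax f) : IsDiffMax (-f) := by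
  obtain ⟨s, t, p, q, hp, hq, rfl⟩ := hf
  exact ⟨t, s, q, p, hq, hp, by simp⟩

lemma IsDiffMax.sup {f f' : (Fin d → ℝ) → ℝ} (hf : IsDiffMax f) (hf' : IsDiffMax f') :
    IsDiffMax (f ⊔ f') := by
  obtain ⟨s, t, p, q, hp, hq, rfl⟩ := hf
  obtain ⟨s', t', p', q', hp', hq', rfl⟩ := hf'
  obtain ⟨u, hu⟩ := hp.add hq'
  obtain ⟨u', hu'⟩ := hp'.add hq
  obtain ⟨v, hv⟩ := hq.add hq'
  refine ⟨_, _, _, _, hu.sup hu', hv, ?_⟩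
  funext x
  simp only [Pi.sup_apply, Pi.sub_apply, Pi.add_apply]
  rw [← max_sub_sub_right]
  congr 1 <;> ring

lemma IsDiffMax.inf {f f' : (Fin d → ℝ) → ℝ} (hf : IsDiffMax f) (hf' : IsDiffMax f') :
    IsDiffMax (f ⊓ f') := by
  have := (hf.neg.sup hf'.neg).neg
  rwa [neg_sup, neg_neg, neg_neg] at this

/-- A CPWL function is the maximum, over the finitely many sets `{i | f y ≤ g i y}`, of the minimum
of the `g i` in that set, hence a difference of two finite maxima of affine functions. -/
lemma isDiffMax_of_isCPWL {f : (Fin d → ℝ) → ℝ} (hf : IsCPWL d f) : IsDiffMax f := by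
  classical
  obtain ⟨hc, k, g, hg⟩ := hf
  let S : (Fin d → ℝ) → Finset (Fin k) := fun y => {i | f y ≤ g i y}
  have hS : ∀ y, (S y).Nonempty := fun y => by
    obtain ⟨i, hi⟩ := hg y
    exact ⟨i, by simp [S, hi]⟩
  -- the value at the empty set is irrelevant
  let m : Finset (Fin k) → (Fin d → ℝ) → ℝ := fun A =>
    if h : A.Nonempty then A.inf' h (fun i => (g i : (Fin d → ℝ) → ℝ))
    else (0 : (Fin d → ℝ) →ᵃ[ℝ] ℝ)
  have hm : ∀ A, IsDiffMax (m A) := by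
    intro A
    by_cases h : A.Nonempty
    · simp only [m, dif_pos h]
      exact Finset.inf'_induction h _ (fun _ h1 _ h2 => h1.inf h2) fun i _ => IsDiffMax.affine _
    · simp only [m, dif_neg h]
      exact IsDiffMax.affine _
  let T : Finset (Finset (Fin k)) := {A | ∃ y, A = S y}
  have hT : T.Nonempty := ⟨S 0, by simp [T]⟩
  have hfm : f = T.sup' hT m := by
    funext x
    rw [Finset.sup'_apply]
    apply le_antisymm
    · refine le_trans ?_ (Finset.le_sup' (fun A => m A x) (show S x ∈ T by simp [T]))
      simp only [m, dif_pos (hS x), Finset.inf'_apply]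
      exact Finset.le_inf' _ _ fun i hi => by simpa [S] using hi
    · apply Finset.sup'_le
      intro A hA
      obtain ⟨y, rfl⟩ : ∃ y, A = S y := by simpa [T] using hA
      obtain ⟨i, h1, h2⟩ := exists_separating f hc g hg x y
      simp only [m, dif_pos (hS y), Finset.inf'_apply]
      exact (Finset.inf'_le (fun i => g i x) (by simpa [S] using h1)).trans h2
  rw [hfm]
  exact Finset.sup'_induction hT _ (fun _ h1 _ h2 => h1.sup h2) fun A _ => hm A

/-! ### Reduction to maxima of at most `d + 1` affine functions -/

/-- The pointwise maximum of a finite set of affine functions, `0` for the empty set. -/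
def maxFn (s : Finset ((Fin d → ℝ) →ᵃ[ℝ] ℝ)) (x : Fin d → ℝ) : ℝ :=
  if h : s.Nonempty then s.sup' h (fun g => g x) else 0

lemma isMaxOf_maxFn {s : Finset ((Fin d → ℝ) →ᵃ[ℝ] ℝ)} (hs : s.Nonempty) :
    IsMaxOf s (maxFn s) := by
  intro x
  simp only [maxFn, dif_pos hs]
  refine ⟨?_, fun g hg => Finset.le_sup' (fun g : (Fin d → ℝ) →ᵃ[ℝ] ℝ => g x) hg⟩
  obtain ⟨g, hg, h⟩ := Finset.exists_mem_eq_sup' hs (fun g : (Fin d → ℝ) →ᵃ[ℝ] ℝ => g x)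
  exact ⟨g, hg, h⟩

/-- The linear parts of more than `d + 1` affine functions are affinely dependent, so some nontrivial
linear combination with coefficients of sum zero is constant; the sign of `c` is chosen so that this
constant is nonnegative. -/
lemma exists_relation (s : Finset ((Fin d → ℝ) →ᵃ[ℝ] ℝ)) (hs : d + 1 < s.card) :
    ∃ c : ((Fin d → ℝ) →ᵃ[ℝ] ℝ) → ℝ, (∃ g ∈ s, c g ≠ 0) ∧ ∑ g ∈ s, c g = 0 ∧
      ∀ x, 0 ≤ ∑ g ∈ s, c g * g x := by
  classical
  have hdep : ¬ LinearIndependent ℝ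
      (fun g : s => ((g : (Fin d → ℝ) →ᵃ[ℝ] ℝ).linear, (1 : ℝ))) := by
    intro h
    have := h.fintype_card_le_finrank
    rw [Module.finrank_prod, Module.finrank_linearMap] at this
    simp at this
    omega
  obtain ⟨c, hc, i, hi⟩ := Fintype.not_linearIndependent_iff.1 hdep
  let c' : ((Fin d → ℝ) →ᵃ[ℝ] ℝ) → ℝ := fun g => if h : g ∈ s then c ⟨g, h⟩ else 0
  have hcc : ∀ g : s, c' g = c g := fun g => by simp [c']
  have h1 : ∑ g ∈ s, c' g = 0 := by
    have := congrArg Prod.snd hc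
    rw [← Finset.sum_coe_sort]
    simpa [Prod.snd_sum, hcc] using this
  have h2 : ∀ x, ∑ g ∈ s, c' g * g.linear x = 0 := by
    intro x
    have := congrArg (fun z => z.1 x) hc
    rw [← Finset.sum_coe_sort]
    simpa [Prod.fst_sum, hcc, LinearMap.sum_apply] using this
  have h3 : ∀ x, ∑ g ∈ s, c' g * g x = ∑ g ∈ s, c' g * g 0 := by
    intro x
    have : ∀ g : (Fin d → ℝ) →ᵃ[ℝ] ℝ, g x = g.linear x + g 0 := fun g => by
      conv_lhs => rw [AffineMap.decomp g]
      simp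
    calc ∑ g ∈ s, c' g * g x = ∑ g ∈ s, (c' g * g.linear x + c' g * g 0) :=
          Finset.sum_congr rfl fun g _ => by rw [this g, mul_add]
      _ = _ := by rw [Finset.sum_add_distrib, h2, zero_add]
  have hne : c' i ≠ 0 := by rwa [hcc]
  rcases le_total 0 (∑ g ∈ s, c' g * g 0) with h | h
  · exact ⟨c', ⟨i, i.2, hne⟩, h1, fun x => by rwa [h3]⟩
  · refine ⟨fun g => - c' g, ⟨i, i.2, by simpa using hne⟩, by simp [h1], fun x => ?_⟩
    simp only [neg_mul, Finset.sum_neg_distrib, h3]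
    linarith

/-- A set of more than `d + 1` affine functions splits into two nonempty parts, `N` and its
complement, such that at no point all members of `N` exceed all members of the complement. -/
lemma exists_split (s : Finset ((Fin d → ℝ) →ᵃ[ℝ] ℝ)) (hs : d + 1 < s.card) :
    ∃ N ⊆ s, N.Nonempty ∧ (∃ g ∈ s, g ∉ N) ∧
      ∀ x, ∃ g ∈ s, g ∉ N ∧ ∃ g' ∈ N, g' x ≤ g x := by
  classical
  obtain ⟨c, hc0, hsum, hc⟩ := exists_relation s hs
  obtain ⟨p, hp, hcp⟩ := Finset.exists_pos_of_sum_zero_of_exists_nonzero c hsum hc0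
  have hneg : ∃ g ∈ s, c g < 0 := by
    obtain ⟨g, hg, h⟩ := Finset.exists_pos_of_sum_zero_of_exists_nonzero (fun g => - c g)
      (by simp [hsum] : ∑ g ∈ s, - c g = 0) (by simpa using hc0)
    exact ⟨g, hg, by simpa using h⟩
  obtain ⟨n, hn, hcn⟩ := hneg
  let N := s.filter fun g => c g < 0
  have hnN : n ∈ N := by simp [N, hn, hcn]
  have hpN : p ∉ N := by simp [N, hcp.le]
  refine ⟨N, Finset.filter_subset _ _, ⟨n, hnN⟩, ⟨p, hp, hpN⟩, fun x => ?_⟩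
  by_contra! hcon
  obtain ⟨m, hm, hmin⟩ := Finset.exists_min_image N (fun g => g x) ⟨n, hnN⟩
  -- relative to the smallest value on `N`, every term of the relation is nonpositive
  have hlt : ∑ g ∈ s, c g * (g x - m x) < ∑ g ∈ s, (0 : ℝ) := by
    apply Finset.sum_lt_sum
    · intro g hg
      by_cases hgN : g ∈ N
      · have h1 : c g < 0 := (Finset.mem_filter.1 hgN).2
        have h2 := hmin g hgN
        nlinarith
      · have h1 : 0 ≤ c g := by
          by_contra! h
          exact hgN (Finset.mem_filter.2 ⟨hg, h⟩)
        have h2 := hcon g hg hgN m hm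
        nlinarith
    · exact ⟨p, hp, by nlinarith [hcon p hp hpN m hm]⟩
  have heq : ∑ g ∈ s, c g * (g x - m x) = ∑ g ∈ s, c g * g x := by
    simp only [mul_sub, Finset.sum_sub_distrib, ← Finset.sum_mul, hsum]
    simp
  have := hc x
  simp only [Finset.sum_const_zero] at hlt
  linarith

/-- Inclusion–exclusion: `∑ (-1)^|S| max (P ∪ S)` over `S ⊆ N` vanishes, since at each point some
member of `N` lies below the maximum of `P`, and inserting it into `S` does not change the
maximum. -/
lemma alternating_sum_eq_zero [DecidableEq ((Fin d → ℝ) →ᵃ[ℝ] ℝ)]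
    (P N : Finset ((Fin d → ℝ) →ᵃ[ℝ] ℝ))
    (h : ∀ x, ∃ g ∈ P, ∃ g' ∈ N, g' x ≤ g x) :
    ∑ S ∈ N.powerset, (-1 : ℝ) ^ S.card • maxFn (P ∪ S) = 0 := by
  funext x
  obtain ⟨g, hg, g', hg', hle⟩ := h x
  have hP : ∀ S, (P ∪ S).Nonempty := fun S => ⟨g, Finset.mem_union_left _ hg⟩
  have key : ∀ S, maxFn (P ∪ insert g' S) x = maxFn (P ∪ S) x := by
    intro S
    obtain ⟨⟨r, hr, hrx⟩, h2⟩ := isMaxOf_maxFn (hP (insert g' S)) x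
    obtain ⟨⟨r', hr', hrx'⟩, h2'⟩ := isMaxOf_maxFn (hP S) x
    apply le_antisymm
    · rw [hrx]
      by_cases hrg : r = g'
      · subst hrg
        exact hle.trans (h2' g (Finset.mem_union_left _ hg))
      · apply h2'
        simp only [Finset.mem_union, Finset.mem_insert] at hr ⊢
        tauto
    · rw [hrx']
      apply h2
      simp only [Finset.mem_union, Finset.mem_insert] at hr' ⊢
      tauto
  rw [← Finset.insert_erase hg', Finset.sum_powerset_insert (Finset.notMem_erase _ _),
    ← Finset.sum_add_distrib]
  simp only [Finset.sum_apply, Pi.add_apply, Pi.smul_apply, smul_eq_mul, Pi.zero_apply]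
  apply Finset.sum_eq_zero
  intro S hS
  have hgS : g' ∉ S := fun h => Finset.notMem_erase g' N (Finset.mem_powerset.1 hS h)
  rw [key, Finset.card_insert_of_notMem hgS, pow_succ]
  ring

lemma mem_span_of_isMaxOf (s : Finset ((Fin d → ℝ) →ᵃ[ℝ] ℝ)) (h : (Fin d → ℝ) → ℝ)
    (hh : IsMaxOf s h) :
    h ∈ Submodule.span ℝ {p : (Fin d → ℝ) → ℝ | ∃ t, t.card ≤ d + 1 ∧ IsMaxOf t p} := by
  classical
  induction hcard : s.card using Nat.strong_induction_on generalizing s h with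
  | _ n ih =>
  subst hcard
  by_cases hs : s.card ≤ d + 1
  · exact Submodule.subset_span ⟨s, hs, hh⟩
  obtain ⟨N, hNs, hN, ⟨g, hg, hgN⟩, hsplit⟩ := exists_split s (not_le.1 hs)
  have hsum := alternating_sum_eq_zero (s \ N) N (fun x => by
    obtain ⟨g, hg, hgN, h⟩ := hsplit x
    exact ⟨g, Finset.mem_sdiff.2 ⟨hg, hgN⟩, h⟩)
  rw [← Finset.add_sum_erase _ _ (Finset.mem_powerset_self N), Finset.sdiff_union_of_subset hNs,
    hh.unique (isMaxOf_maxFn ⟨g, hg⟩) |>.symm] at hsum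
  have hmem : ((-1 : ℝ) ^ N.card) • h ∈
      Submodule.span ℝ {p : (Fin d → ℝ) → ℝ | ∃ t, t.card ≤ d + 1 ∧ IsMaxOf t p} := by
    rw [eq_neg_of_add_eq_zero_left hsum]
    refine Submodule.neg_mem _ (Submodule.sum_mem _ fun S hS => Submodule.smul_mem _ _ ?_)
    obtain ⟨hSN, hS⟩ := Finset.mem_erase.1 hS
    rw [Finset.mem_powerset] at hS
    refine ih _ (Finset.card_lt_card ?_) (s \ N ∪ S) _
      (isMaxOf_maxFn ⟨g, by simp [hg, hgN]⟩) rfl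
    obtain ⟨r, hrN, hrS⟩ := Finset.exists_of_ssubset (hS.ssubset_of_ne hSN)
    refine (Finset.ssubset_iff_of_subset ?_).2 ⟨r, hNs hrN, by simp [hrN, hrS]⟩
    exact Finset.union_subset Finset.sdiff_subset (hS.trans hNs)
  rwa [Submodule.smul_mem_iff _ (by simp)] at hmem

/-! ### Function spaces of ReLU networks -/

/-- The functions computed by networks with `k` hidden layers of arbitrary widths: `netSpace d 0`
consists of the affine functions and `netSpace d (k + 1)` of the linear combinations of `σ ∘ u` with
`u` in `netSpace d k`. Biases after the first layer are not needed, as `σ 1 = 1`. -/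
def netSpace (d : ℕ) : ℕ → Submodule ℝ ((Fin d → ℝ) → ℝ)
  | 0 =>
    { carrier := {h | ∃ g : (Fin d → ℝ) →ᵃ[ℝ] ℝ, h = g}
      add_mem' := by
        rintro _ _ ⟨g, rfl⟩ ⟨g', rfl⟩
        exact ⟨g + g', rfl⟩
      zero_mem' := ⟨0, rfl⟩
      smul_mem' := by
        rintro c _ ⟨g, rfl⟩
        exact ⟨c • g, rfl⟩ }
  | k + 1 => Submodule.span ℝ {h | ∃ u ∈ netSpace d k, h = fun x => max (u x) 0}

lemma relu_mem {k : ℕ} {u : (Fin d → ℝ) → ℝ} (hu : u ∈ netSpace d k) :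
    (fun x => max (u x) 0) ∈ netSpace d (k + 1) :=
  Submodule.subset_span ⟨u, hu, rfl⟩

lemma netSpace_succ {k : ℕ} {u : (Fin d → ℝ) → ℝ} (hu : u ∈ netSpace d k) :
    u ∈ netSpace d (k + 1) := by
  convert Submodule.sub_mem _ (relu_mem hu) (relu_mem (Submodule.neg_mem _ hu)) using 1
  funext x
  simp only [Pi.sub_apply, Pi.neg_apply]
  rcases le_total 0 (u x) with h | h <;> simp [h]

lemma sup_mem {k : ℕ} {u v : (Fin d → ℝ) → ℝ} (hu : u ∈ netSpace d k) (hv : v ∈ netSpace d k) :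
    u ⊔ v ∈ netSpace d (k + 1) := by
  convert Submodule.add_mem _ (relu_mem (Submodule.sub_mem _ hu hv)) (netSpace_succ hv) using 1
  funext x
  simp only [Pi.sub_apply, Pi.add_apply, Pi.sup_apply]
  rcases le_total (u x) (v x) with h | h <;> simp [h]

/-- Pairing up the functions halves their number with each hidden layer. -/
lemma IsMaxOf.mem_netSpace {k : ℕ} {s : Finset ((Fin d → ℝ) →ᵃ[ℝ] ℝ)} {h : (Fin d → ℝ) → ℝ}
    (hs : s.card ≤ 2 ^ k) (hh : IsMaxOf s h) : h ∈ netSpace d k := by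
  classical
  induction k generalizing s h with
  | zero =>
    obtain ⟨g, hg, -⟩ := (hh 0).1
    obtain rfl : s = {g} := by
      refine (Finset.eq_of_subset_of_card_le (Finset.singleton_subset_iff.2 hg) ?_).symm
      simpa using hs
    exact ⟨g, hh.unique (isMaxOf_singleton g)⟩
  | succ k ih =>
    by_cases hk : s.card ≤ 2 ^ k
    · exact netSpace_succ (ih hk hh)
    · obtain ⟨t, hts, ht⟩ := Finset.exists_subset_card_eq (not_le.1 hk).le
      have htc : (s \ t).card = s.card - 2 ^ k := by rw [Finset.card_sdiff_of_subset hts, ht]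
      rw [pow_succ] at hs
      have h1 := isMaxOf_maxFn (Finset.card_pos.1 (by rw [ht]; positivity) : t.Nonempty)
      have h2 := isMaxOf_maxFn (Finset.card_pos.1 (by omega) : (s \ t).Nonempty)
      have h3 := h1.sup h2
      rw [Finset.union_sdiff_of_subset hts] at h3
      rw [hh.unique h3]
      exact sup_mem (ih ht.le h1) (ih (by omega) h2)

/-! ### Realizing the function spaces by networks -/

/-- Pre-activations of a network with input dimension `d`, where layer `l + 1` has `n l` neurons,
weights `w l` and biases `b l`; the weights and biases are indexed by natural numbers, so that
single layers can be replaced without transport along equalities of widths. -/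
def pre (n : ℕ → ℕ) (w : ℕ → ℕ → ℕ → ℝ) (b : ℕ → ℕ → ℝ) (x : Fin d → ℝ) : ℕ → ℕ → ℝ
  | 0, i => (∑ j : Fin d, w 0 i j * x j) + b 0 i
  | k + 1, i => (∑ j ∈ Finset.range (n k), w (k + 1) i j * max (pre n w b x k j) 0) + b (k + 1) i

lemma pre_congr {n n' : ℕ → ℕ} {w w' : ℕ → ℕ → ℕ → ℝ} {b b' : ℕ → ℕ → ℝ} (x : Fin d → ℝ) (k : ℕ)
    (hn : ∀ l ≤ k, n l = n' l) (hw : ∀ l ≤ k, w l = w' l) (hb : ∀ l ≤ k, b l = b' l) :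
    pre n w b x k = pre n' w' b' x k := by
  induction k with
  | zero =>
    funext i
    simp only [pre, hw 0 le_rfl, hb 0 le_rfl]
  | succ k ih =>
    have := ih (fun l hl => hn l (by omega)) (fun l hl => hw l (by omega))
      (fun l hl => hb l (by omega))
    funext i
    simp only [pre, hw (k + 1) le_rfl, hb (k + 1) le_rfl, hn k (by omega), this]

/-- Finitely many functions in `netSpace d (k + 1)` can share one hidden layer. -/
lemma exists_common_relu {k m : ℕ} (h : Fin m → (Fin d → ℝ) → ℝ)
    (hh : ∀ i, h i ∈ netSpace d (k + 1)) :
    ∃ (p : ℕ) (u : Fin p → (Fin d → ℝ) → ℝ) (c : Fin m → Fin p → ℝ),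
      (∀ j, u j ∈ netSpace d k) ∧ ∀ i x, h i x = ∑ j, c i j * max (u j x) 0 := by
  classical
  choose T hTs hT using fun i => Submodule.mem_span_finite_of_mem_span (hh i)
  let U := Finset.univ.biUnion T
  have hU : ∀ v ∈ U, ∃ u ∈ netSpace d k, v = fun x => max (u x) 0 := by
    intro v hv
    obtain ⟨i, -, hi⟩ := Finset.mem_biUnion.1 hv
    exact hTs i hi
  have hhU : ∀ i, h i ∈ Submodule.span ℝ (U : Set ((Fin d → ℝ) → ℝ)) := fun i =>
    Submodule.span_mono
      (Finset.coe_subset.2 (Finset.subset_biUnion_of_mem T (Finset.mem_univ i))) (hT i)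
  choose c hcs hc using fun i => Submodule.mem_span_finset.1 (hhU i)
  choose u hu huv using fun v : U => hU v v.2
  let e := U.equivFin
  refine ⟨U.card, fun j => u (e.symm j), fun i j => c i (e.symm j), fun j => hu _, fun i x => ?_⟩
  have h1 : ∀ v : U, max (u v x) 0 = (v : (Fin d → ℝ) → ℝ) x := fun v =>
    (congrFun (huv v) x).symm
  simp only [h1]
  rw [e.symm.sum_comp (fun v : U => c i v * (v : (Fin d → ℝ) → ℝ) x),
    Finset.sum_coe_sort U (fun v => c i v * v x), ← hc i]
  simp

lemma exists_pre (k m : ℕ) (h : Fin m → (Fin d → ℝ) → ℝ) (hh : ∀ i, h i ∈ netSpace d k) :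
    ∃ (n : ℕ → ℕ) (w : ℕ → ℕ → ℕ → ℝ) (b : ℕ → ℕ → ℝ), n k = m ∧
      ∀ (i : Fin m) x, pre n w b x k i = h i x := by
  classical
  induction k generalizing m with
  | zero =>
    choose g hg using hh
    refine ⟨fun _ => m,
      fun _ i j => if hi : i < m then
        if hj : j < d then (g ⟨i, hi⟩).linear (Pi.single ⟨j, hj⟩ 1) else 0 else 0,
      fun _ i => if hi : i < m then g ⟨i, hi⟩ 0 else 0, rfl, fun i x => ?_⟩
    rw [hg i]
    conv_rhs => rw [AffineMap.decomp (g i)]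
    simp only [pre, Fin.is_lt, dif_pos, Fin.eta, Pi.add_apply]
    congr 1
    conv_rhs => rw [LinearMap.pi_apply_eq_sum_univ (g i).linear x]
    refine Finset.sum_congr rfl fun j _ => ?_
    rw [smul_eq_mul, mul_comm]
    congr 2
    funext l
    simp [Pi.single_apply, eq_comm]
  | succ k ih =>
    obtain ⟨p, u, c, hu, hc⟩ := exists_common_relu h hh
    obtain ⟨n, w, b, hn, hpre⟩ := ih p u hu
    refine ⟨Function.update n (k + 1) m,
      Function.update w (k + 1) fun i j =>
        if hi : i < m then if hj : j < p then c ⟨i, hi⟩ ⟨j, hj⟩ else 0 else 0,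
      Function.update b (k + 1) fun _ => 0, by simp, fun i x => ?_⟩
    have hcongr := pre_congr (n := Function.update n (k + 1) m)
      (w := Function.update w (k + 1) fun i j =>
        if hi : i < m then if hj : j < p then c ⟨i, hi⟩ ⟨j, hj⟩ else 0 else 0)
      (b := Function.update b (k + 1) fun _ => 0) (n' := n) (w' := w) (b' := b) x k
      (fun l hl => Function.update_of_ne (by omega) _ _)
      (fun l hl => Function.update_of_ne (by omega) _ _)
      (fun l hl => Function.update_of_ne (by omega) _ _)
    rw [pre, hcongr, Function.update_of_ne (by omega : k ≠ k + 1), hn, Finset.sum_range, hc]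
    simp [hpre]

lemma isReLUNet_of_mem {k : ℕ} {f : (Fin d → ℝ) → ℝ} (hf : f ∈ netSpace d k) :
    ∃ ns : ℕ → ℕ, IsReLUNet d (k + 1) ns f := by
  obtain ⟨n, w, b, hn, hpre⟩ := exists_pre k 1 (fun _ => f) (fun _ => hf)
  let net : ReLUNet d (k + 1) :=
    { hL1 := by omega
      width := fun l => Nat.casesOn l d n
      h0 := rfl
      hL := hn
      W := fun l => Matrix.of fun i j => w l i j
      b := fun l i => b l i }
  have hnet : ∀ x l (i : Fin (net.width (l + 1))), net.preact x l i = pre n w b x l i := by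
    intro x l
    induction l with
    | zero => intro i; rfl
    | succ l ih =>
      intro i
      rw [ReLUNet.preact, pre]
      simp only [ih]
      congr 1
      exact Fin.sum_univ_eq_sum_range (fun j => w (l + 1) i j * max (pre n w b x l j) 0) (n l)
  refine ⟨net.width, net, fun _ _ _ => rfl, fun x => ?_⟩
  rw [ReLUNet.eval, hnet]
  exact hpre 0 x

end CPWL

/-- The other direction of Proposition 2.1: every CPWL function on `ℝ^d` is a ReLU NN
function of depth `⌈log₂ (d+1)⌉ + 1` with some choice of hidden widths. -/
theorem cpwl_isReLUNet (d : ℕ) (f : (Fin d → ℝ) → ℝ) (hf : IsCPWL d f) :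
    ∃ ns : ℕ → ℕ, IsReLUNet d (Nat.clog 2 (d + 1) + 1) ns f := by
  obtain ⟨s, t, p, q, hp, hq, rfl⟩ := CPWL.isDiffMax_of_isCPWL hf
  have hle : Submodule.span ℝ {p : (Fin d → ℝ) → ℝ | ∃ t, t.card ≤ d + 1 ∧ CPWL.IsMaxOf t p} ≤
      CPWL.netSpace d (Nat.clog 2 (d + 1)) := by
    rw [Submodule.span_le]
    rintro h ⟨t, ht, hh⟩
    exact hh.mem_netSpace (ht.trans (Nat.le_pow_clog one_lt_two _))
  exact CPWL.isReLUNet_of_mem (Submodule.sub_mem _ (hle (CPWL.mem_span_of_isMaxOf s p hp))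
    (hle (CPWL.mem_span_of_isMaxOf t q hq)))
end
end

section
/- If in addition ε₂·ε₁ ≤ min(x₀, 1 − x₀), then the L² error of p₁ against b over the rectangle (0,1) × (0,ε₁) satisfies the exact identity ∫_{(0,1)×(0,ε₁)} (b(x,y) − p₁(x,y))² dx dy = d²·ε₁⁴·ε₂ / 24. -/
/-!
For `y ≥ 0` put `h = ε₂ y`, so that `d y = 2 c h`. Then `(b - p₁)²` equals the square of a tent,
`c² max(h - |x - x₀|, 0)²` (`tent_identity`). It is continuous, so Fubini applies, and since
`[x₀ - h, x₀ + h] ⊆ [0, 1]` the integral in `x` is `2 c² h³ / 3` (`integral_tent_sq`). Integrating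
`2 c² ε₂³ y³ / 3 = d² ε₂ y³ / 6` over `(0, ε₁)` gives the claim.
-/

open MeasureTheory

theorem tent_identity (x₀ c h x : ℝ) (hh : 0 ≤ h) :
    ((if x < x₀ then 2 * c * h else 0) -
      (-c * max (x₀ - x - h) 0 + c * max (x₀ - x + h) 0)) ^ 2 =
      c ^ 2 * max (h - |x - x₀|) 0 ^ 2 := by
  split_ifs with hx
  · rw [abs_of_neg (by linarith), max_eq_left (a := x₀ - x + h) (by linarith)]
    rcases le_total (x₀ - x - h) 0 with h1 | h1
    · rw [max_eq_right h1, max_eq_left (by linarith)]; ring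
    · rw [max_eq_left h1, max_eq_right (by linarith)]; ring
  · rw [abs_of_nonneg (by linarith), max_eq_right (a := x₀ - x - h) (by linarith),
      show h - (x - x₀) = x₀ - x + h by ring]
    ring

theorem integral_tent_sq (x₀ h : ℝ) (hh : 0 ≤ h) (h0 : h ≤ x₀) (h1 : h ≤ 1 - x₀) :
    ∫ x in Set.Ioo (0:ℝ) 1, max (h - |x - x₀|) 0 ^ 2 = 2 * h ^ 3 / 3 := by
  have hcont : Continuous fun x : ℝ => max (h - |x - x₀|) 0 ^ 2 := by fun_prop
  have hI (a b : ℝ) : IntervalIntegrable (fun x : ℝ => max (h - |x - x₀|) 0 ^ 2) volume a b :=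
    hcont.intervalIntegrable a b
  rw [← integral_Ioc_eq_integral_Ioo, ← intervalIntegral.integral_of_le zero_le_one,
    ← intervalIntegral.integral_add_adjacent_intervals (hI 0 (x₀ - h)) (hI _ 1),
    ← intervalIntegral.integral_add_adjacent_intervals (hI (x₀ - h) x₀) (hI _ 1),
    ← intervalIntegral.integral_add_adjacent_intervals (hI x₀ (x₀ + h)) (hI _ 1)]
  have e1 : ∫ x in (0:ℝ)..(x₀ - h), max (h - |x - x₀|) 0 ^ 2 = 0 := by
    rw [intervalIntegral.integral_congr (g := fun _ => (0:ℝ)), intervalIntegral.integral_zero]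
    intro x hx
    rw [Set.uIcc_of_le (by linarith)] at hx
    have := neg_le_abs (x - x₀)
    simp only
    rw [max_eq_right (by linarith [hx.2])]; ring
  have e2 : ∫ x in (x₀ - h)..x₀, max (h - |x - x₀|) 0 ^ 2 = h ^ 3 / 3 := by
    rw [intervalIntegral.integral_congr (g := fun x => (x - (x₀ - h)) ^ 2),
      intervalIntegral.integral_comp_sub_right (fun x => x ^ 2), integral_pow]
    · norm_num
    intro x hx
    rw [Set.uIcc_of_le (by linarith)] at hx
    simp only
    rw [abs_of_nonpos (by linarith [hx.2]), max_eq_left (by linarith [hx.1])]; ring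
  have e3 : ∫ x in x₀..(x₀ + h), max (h - |x - x₀|) 0 ^ 2 = h ^ 3 / 3 := by
    rw [intervalIntegral.integral_congr (g := fun x => ((x₀ + h) - x) ^ 2),
      intervalIntegral.integral_comp_sub_left (fun x => x ^ 2), integral_pow]
    · norm_num
    intro x hx
    rw [Set.uIcc_of_le (by linarith)] at hx
    simp only
    rw [abs_of_nonneg (by linarith [hx.1]), max_eq_left (by linarith [hx.2])]; ring
  have e4 : ∫ x in (x₀ + h)..1, max (h - |x - x₀|) 0 ^ 2 = 0 := by
    rw [intervalIntegral.integral_congr (g := fun _ => (0:ℝ)), intervalIntegral.integral_zero]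
    intro x hx
    rw [Set.uIcc_of_le (by linarith)] at hx
    have := le_abs_self (x - x₀)
    simp only
    rw [max_eq_right (by linarith [hx.1])]; ring
  rw [e1, e2, e3, e4]; ring

/-- Exact `L²` error of `p₁` against `b` over `(0,1) × (0,ε₁)`:
`∫ (b - p₁)² = d² ε₁⁴ ε₂ / 24`, provided `ε₂ ε₁ ≤ min(x₀, 1 - x₀)`. -/
theorem b_sub_p1_L2 (x₀ ε₁ ε₂ d c : ℝ) (hx₀ : x₀ ∈ Set.Ioo (0:ℝ) 1)
    (hε₁ : 0 < ε₁) (hε₂ : 0 < ε₂) (hc : c = d / (2 * ε₂))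
    (hmin : ε₂ * ε₁ ≤ min x₀ (1 - x₀))
    (b p₁ : ℝ → ℝ → ℝ)
    (hb : ∀ x y : ℝ, b x y = if x < x₀ then d * y else 0)
    (hp₁ : ∀ x y : ℝ,
      p₁ x y = -c * max (x₀ - x - ε₂ * y) 0 + c * max (x₀ - x + ε₂ * y) 0) :
    (∫ q in Set.Ioo (0:ℝ) 1 ×ˢ Set.Ioo (0:ℝ) ε₁, (b q.1 q.2 - p₁ q.1 q.2) ^ 2) =
      d ^ 2 * ε₁ ^ 4 * ε₂ / 24 := by
  have hcd : ∀ y, d * y = 2 * c * (ε₂ * y) := by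
    intro y; rw [hc]; field_simp
  have hcont : Continuous fun q : ℝ × ℝ => c ^ 2 * max (ε₂ * q.2 - |q.1 - x₀|) 0 ^ 2 := by
    fun_prop
  have hS : MeasurableSet (Set.Ioo (0:ℝ) 1 ×ˢ Set.Ioo (0:ℝ) ε₁) :=
    measurableSet_Ioo.prod measurableSet_Ioo
  rw [setIntegral_congr_fun (g := fun q : ℝ × ℝ => c ^ 2 * max (ε₂ * q.2 - |q.1 - x₀|) 0 ^ 2) hS
    (by
      intro q hq
      simp only [hb, hp₁, hcd]
      exact tent_identity x₀ c (ε₂ * q.2) q.1 (mul_nonneg hε₂.le hq.2.1.le))]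
  have hint : IntegrableOn (fun q : ℝ × ℝ => c ^ 2 * max (ε₂ * q.2 - |q.1 - x₀|) 0 ^ 2)
      (Set.Ioo (0:ℝ) 1 ×ˢ Set.Ioo (0:ℝ) ε₁) :=
    (hcont.continuousOn.integrableOn_compact
      ((isCompact_Icc (a := (0:ℝ)) (b := 1)).prod (isCompact_Icc (a := (0:ℝ)) (b := ε₁)))).mono_set
      (Set.prod_mono Set.Ioo_subset_Icc_self Set.Ioo_subset_Icc_self)
  rw [IntegrableOn, Measure.volume_eq_prod, ← Measure.prod_restrict] at hint
  -- The integral in `x` is taken first, since the tent has width `ε₂ y`.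
  rw [Measure.volume_eq_prod, ← Measure.prod_restrict, integral_prod_symm _ hint]
  rw [setIntegral_congr_fun (g := fun y : ℝ => d ^ 2 * ε₂ / 6 * y ^ 3) measurableSet_Ioo
    (by
      intro y hy
      have hy' : ε₂ * y ≤ ε₂ * ε₁ := mul_le_mul_of_nonneg_left hy.2.le hε₂.le
      simp only
      rw [integral_const_mul, integral_tent_sq x₀ (ε₂ * y) (mul_nonneg hε₂.le hy.1.le)
        (hy'.trans (hmin.trans (min_le_left _ _))) (hy'.trans (hmin.trans (min_le_right _ _))), hc]
      field_simp
      ring)]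
  rw [integral_const_mul, ← integral_Ioc_eq_integral_Ioo,
    ← intervalIntegral.integral_of_le hε₁.le, integral_pow]
  norm_num
  ring
end

section
/- Assume moreover 0 < ε₁ ≤ 1, and let v₂ : ℝ² → ℝ be a measurable function with |v₂(x,y)| ≤ B for all (x,y). Define b_β(x,y) = d·v₂(x,y) if x < x₀ and b_β(x,y) = 0 if x ≥ x₀, and let D(x,y) = (d/2)·( 𝟙[x < x₀ − ε₂·y] + 𝟙[x < x₀ + ε₂·y] ) (the almost-everywhere y-partial derivative of p₁). Then ∫_{(0,1)×(0,ε₁)} ( b_β(x,y) − v₂(x,y)·D(x,y) )² dx dy ≤ d²·B²·ε₁·ε₂ / 4. -/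
open MeasureTheory

/-!
The three indicators `x < x₀`, `x < x₀ - ε₂ y`, `x < x₀ + ε₂ y` agree unless `|x - x₀| ≤ ε₂ y`, and
on that set the average of the last two is `1/2`, up to the boundary lines. Hence the integrand is
at most `d² B² / 4` on the triangle `0 < y < ε₁`, `|x - x₀| ≤ ε₂ y`, and zero elsewhere in the
strip. The triangle has area `ε₁² ε₂` (`volume_errorTriangle`), which is at most `ε₁ ε₂` because
`ε₁ ≤ 1`.
-/

/-- The triangle with apex `(x₀, 0)`, bounded by the lines `x = x₀ ± ε₂ y` and `y = ε₁`, that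
carries the error. -/
def errorTriangle (x₀ ε₁ ε₂ : ℝ) : Set (ℝ × ℝ) :=
  {q | q.2 ∈ Set.Ioo 0 ε₁ ∧ |q.1 - x₀| ≤ ε₂ * q.2}

lemma measurableSet_errorTriangle (x₀ ε₁ ε₂ : ℝ) : MeasurableSet (errorTriangle x₀ ε₁ ε₂) := by
  have h1 : MeasurableSet {q : ℝ × ℝ | q.2 ∈ Set.Ioo 0 ε₁} := measurable_snd measurableSet_Ioo
  have h2 : MeasurableSet {q : ℝ × ℝ | |q.1 - x₀| ≤ ε₂ * q.2} :=
    (isClosed_le (by fun_prop) (by fun_prop)).measurableSet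
  exact h1.inter h2

lemma volume_errorTriangle (x₀ ε₁ ε₂ : ℝ) (hε₁ : 0 < ε₁) (hε₂ : 0 < ε₂) :
    volume (errorTriangle x₀ ε₁ ε₂) = ENNReal.ofReal (ε₂ * ε₁ ^ 2) := by
  rw [Measure.volume_eq_prod, Measure.prod_apply_symm (measurableSet_errorTriangle x₀ ε₁ ε₂)]
  have hslice : ∀ y : ℝ, volume ((fun x : ℝ => (x, y)) ⁻¹' errorTriangle x₀ ε₁ ε₂) =
      (Set.Ioo 0 ε₁).indicator (fun y => ENNReal.ofReal (2 * ε₂ * y)) y := by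
    intro y
    by_cases hy : y ∈ Set.Ioo 0 ε₁
    · have hset : (fun x : ℝ => (x, y)) ⁻¹' errorTriangle x₀ ε₁ ε₂ =
          Set.Icc (x₀ - ε₂ * y) (x₀ + ε₂ * y) := by
        ext x
        simp only [errorTriangle, Set.mem_preimage, Set.mem_ofPred_eq, hy, true_and, abs_le,
          Set.mem_Icc]
        constructor <;> rintro ⟨h1, h2⟩ <;> constructor <;> linarith
      rw [hset, Real.volume_Icc, Set.indicator_of_mem hy]
      congr 1
      ring
    · have hset : (fun x : ℝ => (x, y)) ⁻¹' errorTriangle x₀ ε₁ ε₂ = ∅ := by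
        ext x
        simp only [errorTriangle, Set.mem_preimage, Set.mem_ofPred_eq, hy, false_and,
          Set.mem_empty_iff_false]
      rw [hset, measure_empty, Set.indicator_of_notMem hy]
  simp_rw [hslice]
  rw [lintegral_indicator measurableSet_Ioo, ← ofReal_integral_eq_lintegral_ofReal]
  · rw [← integral_Ioc_eq_integral_Ioo, ← intervalIntegral.integral_of_le hε₁.le,
      intervalIntegral.integral_const_mul, integral_id]
    congr 1
    ring
  · exact (Continuous.integrableOn_Icc (by fun_prop)).mono_set Set.Ioo_subset_Icc_self
  · filter_upwards [ae_restrict_mem measurableSet_Ioo] with y hy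
    have := hy.1
    positivity

/-- Pointwise bound with `t = ε₂ y`: the error is at most `|d v| / 2` for `|x - x₀| ≤ t` and vanishes
elsewhere. -/
lemma sq_error_le (x₀ d B v x t : ℝ) (ht : 0 < t) (hv : |v| ≤ B) :
    ((if x < x₀ then d * v else 0) - v * ((d / 2) * ((if x < x₀ - t then (1:ℝ) else 0) +
      (if x < x₀ + t then (1:ℝ) else 0)))) ^ 2 ≤
    if |x - x₀| ≤ t then d ^ 2 * B ^ 2 / 4 else 0 := by
  have hv2 : d ^ 2 * v ^ 2 ≤ d ^ 2 * B ^ 2 :=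
    mul_le_mul_of_nonneg_left (sq_le_sq' (abs_le.mp hv).1 (abs_le.mp hv).2) (sq_nonneg d)
  have h0 : 0 ≤ d ^ 2 * B ^ 2 := by positivity
  simp only [abs_le]
  split_ifs <;> first | nlinarith | (exfalso; grind)

/-- `L²` bound for the directional-derivative error:
`∫_{(0,1)×(0,ε₁)} (b_β - v₂·D)² ≤ d² B² ε₁ ε₂ / 4`. -/
theorem bbeta_L2_bound (x₀ ε₁ ε₂ d c B : ℝ) (hx₀ : x₀ ∈ Set.Ioo (0:ℝ) 1)
    (hε₁ : 0 < ε₁) (hε₁' : ε₁ ≤ 1) (hε₂ : 0 < ε₂) (hc : c = d / (2 * ε₂))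
    (v₂ : ℝ → ℝ → ℝ) (hv₂m : Measurable fun q : ℝ × ℝ => v₂ q.1 q.2)
    (hv₂B : ∀ x y : ℝ, |v₂ x y| ≤ B)
    (bβ D : ℝ → ℝ → ℝ)
    (hbβ : ∀ x y : ℝ, bβ x y = if x < x₀ then d * v₂ x y else 0)
    (hD : ∀ x y : ℝ, D x y = (d / 2) * ((if x < x₀ - ε₂ * y then (1:ℝ) else 0) +
      (if x < x₀ + ε₂ * y then (1:ℝ) else 0))) :
    (∫ q in Set.Ioo (0:ℝ) 1 ×ˢ Set.Ioo (0:ℝ) ε₁,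
        (bβ q.1 q.2 - v₂ q.1 q.2 * D q.1 q.2) ^ 2) ≤
      d ^ 2 * B ^ 2 * ε₁ * ε₂ / 4 := by
  set K := d ^ 2 * B ^ 2 / 4 with hK
  have hK0 : 0 ≤ K := by positivity
  have hT := measurableSet_errorTriangle x₀ ε₁ ε₂
  have hvol := volume_errorTriangle x₀ ε₁ ε₂ hε₁ hε₂
  have hint : Integrable ((errorTriangle x₀ ε₁ ε₂).indicator fun _ => K) :=
    (integrable_indicator_iff hT).2 (integrableOn_const (by simp [hvol]))
  calc (∫ q in Set.Ioo (0:ℝ) 1 ×ˢ Set.Ioo (0:ℝ) ε₁, (bβ q.1 q.2 - v₂ q.1 q.2 * D q.1 q.2) ^ 2)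
      ≤ ∫ q in Set.Ioo (0:ℝ) 1 ×ˢ Set.Ioo (0:ℝ) ε₁,
          (errorTriangle x₀ ε₁ ε₂).indicator (fun _ => K) q := by
        refine integral_mono_of_nonneg (Filter.Eventually.of_forall fun q => sq_nonneg _)
          hint.integrableOn ?_
        filter_upwards [ae_restrict_mem (measurableSet_Ioo.prod measurableSet_Ioo)] with q hq
        have hy : q.2 ∈ Set.Ioo 0 ε₁ := hq.2
        have h := sq_error_le x₀ d B (v₂ q.1 q.2) q.1 (ε₂ * q.2) (mul_pos hε₂ hy.1)
          (hv₂B q.1 q.2)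
        rw [hbβ, hD]
        simpa only [Set.indicator_apply, errorTriangle, Set.mem_ofPred_eq, hy, true_and] using h
    _ ≤ ∫ q, (errorTriangle x₀ ε₁ ε₂).indicator (fun _ => K) q :=
        setIntegral_le_integral hint
          (Filter.Eventually.of_forall fun q => Set.indicator_nonneg (fun _ _ => hK0) q)
    _ = ε₂ * ε₁ ^ 2 * K := by
        rw [integral_indicator_const K hT, measureReal_def, hvol,
          ENNReal.toReal_ofReal (by positivity), smul_eq_mul]
    _ ≤ ε₂ * ε₁ * K := by
        gcongr
        nlinarith
    _ = d ^ 2 * B ^ 2 * ε₁ * ε₂ / 4 := by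
        rw [hK]
        ring
end

section
/- (Lemma A.1 of the paper.) Assume 0 < ε₁ ≤ 1, ε₂ > 0 with ε₂·ε₁ ≤ min(x₀, 1 − x₀), and let v₂ : ℝ² → ℝ be measurable with |v₂(x,y)| ≤ B for all (x,y). With b_β(x,y) = d·v₂(x,y)·𝟙[x < x₀] and D(x,y) = (d/2)·( 𝟙[x < x₀ − ε₂·y] + 𝟙[x < x₀ + ε₂·y] ) (the almost-everywhere y-partial derivative of p₁), the graph-norm error satisfies ( ∫_{(0,1)×(0,ε₁)} (b − p₁)² dx dy + ∫_{(0,1)×(0,ε₁)} (b_β − v₂·D)² dx dy )^{1/2} ≤ √(ε₁³/24 + B²/4) · |d| · √(ε₁·ε₂). -/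
/-!
For fixed `y > 0` the functions `b` and `p₁` (and likewise `b_β` and `v₂ D`) agree off the strip
`|x - x₀| ≤ ε₂ y`. On the strip `|b - p₁| = |c| (ε₂ y - |x - x₀|)` and `|b_β - v₂ D| ≤ |d| B / 2`.
Integrating over the strip (`setIntegral_le_of_strip`) bounds the two squared norms by
`∫ 2 c² (ε₂ y)³ / 3 dy = d² ε₂ ε₁⁴ / 24` and `∫ (d² B² / 4) 2 ε₂ y dy = d² B² ε₂ ε₁² / 4`;
the condition `ε₁ ≤ 1` turns `ε₁²` into `ε₁` in the second one.
-/

open MeasureTheory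

/-- Fubini on the strip `|x - x₀| ≤ ε₂ y`: a nonnegative function dominated by `F` on the strip and
by `0` elsewhere has integral at most `∫ Φ`, where `Φ y` is the integral of `F (·, y)` over the
section of the strip. No integrability of `f` is needed, a non-integrable `f` having integral
`0`. -/
lemma setIntegral_le_of_strip (x₀ ε₁ ε₂ : ℝ) (hε₁ : 0 < ε₁) (hε₂ : 0 < ε₂)
    (f F : ℝ × ℝ → ℝ) (Φ : ℝ → ℝ) (hF : Continuous F) (hΦ : Continuous Φ)
    (hF0 : ∀ q, 0 ≤ F q) (hf0 : ∀ q, 0 ≤ f q)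
    (hfF : ∀ q : ℝ × ℝ, 0 < q.2 →
      f q ≤ Set.indicator {q : ℝ × ℝ | |q.1 - x₀| ≤ ε₂ * q.2} F q)
    (hint : ∀ y, 0 < y → ∫ x in (x₀ - ε₂ * y)..(x₀ + ε₂ * y), F (x, y) = Φ y) :
    ∫ q in Set.Ioo (0:ℝ) 1 ×ˢ Set.Ioo (0:ℝ) ε₁, f q ≤ ∫ y in (0:ℝ)..ε₁, Φ y := by
  set S : Set (ℝ × ℝ) := {q : ℝ × ℝ | |q.1 - x₀| ≤ ε₂ * q.2} with hS
  have hSm : MeasurableSet S :=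
    (isClosed_le (by fun_prop) (by fun_prop)).measurableSet
  have hS0 : ∀ q, 0 ≤ S.indicator F q := fun q => Set.indicator_nonneg (fun q _ => hF0 q) q
  have hI : IntegrableOn (S.indicator F) (Set.Ioo (0:ℝ) 1 ×ˢ Set.Ioo (0:ℝ) ε₁) := by
    have h1 : IntegrableOn F (Set.Icc (0:ℝ) 1 ×ˢ Set.Icc (0:ℝ) ε₁) :=
      hF.continuousOn.integrableOn_compact (isCompact_Icc.prod isCompact_Icc)
    exact (h1.mono_set (Set.prod_mono Set.Ioo_subset_Icc_self Set.Ioo_subset_Icc_self)).indicator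
      hSm
  have hIp : Integrable (S.indicator F)
      (((volume : Measure ℝ).restrict (Set.Ioo 0 1)).prod
        ((volume : Measure ℝ).restrict (Set.Ioo 0 ε₁))) := by
    rw [Measure.prod_restrict]; exact hI
  calc ∫ q in Set.Ioo (0:ℝ) 1 ×ˢ Set.Ioo (0:ℝ) ε₁, f q
      ≤ ∫ q in Set.Ioo (0:ℝ) 1 ×ˢ Set.Ioo (0:ℝ) ε₁, S.indicator F q := by
        refine integral_mono_of_nonneg (Filter.Eventually.of_forall hf0) hI ?_
        filter_upwards [ae_restrict_mem (measurableSet_Ioo.prod measurableSet_Ioo)] with q hq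
        exact hfF q hq.2.1
    _ = ∫ y in Set.Ioo (0:ℝ) ε₁, ∫ x in Set.Ioo (0:ℝ) 1, S.indicator F (x, y) := by
        rw [← integral_prod_symm _ hIp, Measure.prod_restrict]; rfl
    _ ≤ ∫ y in Set.Ioo (0:ℝ) ε₁, Φ y := by
        refine integral_mono_of_nonneg
          (Filter.Eventually.of_forall fun y => integral_nonneg fun x => hS0 _)
          ((hΦ.continuousOn.integrableOn_compact isCompact_Icc).mono_set
            Set.Ioo_subset_Icc_self) ?_
        filter_upwards [ae_restrict_mem measurableSet_Ioo] with y hy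
        have hy0 : 0 < ε₂ * y := mul_pos hε₂ hy.1
        have hsec : (fun x => S.indicator F (x, y)) =
            (Set.Icc (x₀ - ε₂ * y) (x₀ + ε₂ * y)).indicator fun x => F (x, y) := by
          ext x
          have : (x, y) ∈ S ↔ x ∈ Set.Icc (x₀ - ε₂ * y) (x₀ + ε₂ * y) := by
            simp only [hS, Set.mem_ofPred_eq, abs_le, Set.mem_Icc]
            constructor <;> rintro ⟨h1, h2⟩ <;> constructor <;> linarith
          simp only [Set.indicator, this]
        have hcont : IntegrableOn (fun x => F (x, y))
            (Set.Icc (x₀ - ε₂ * y) (x₀ + ε₂ * y)) :=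
          (hF.comp (by fun_prop : Continuous fun x : ℝ => (x, y))).continuousOn.integrableOn_compact
            isCompact_Icc
        calc ∫ x in Set.Ioo (0:ℝ) 1, S.indicator F (x, y)
            ≤ ∫ x, S.indicator F (x, y) := by
              refine setIntegral_le_integral ?_ (Filter.Eventually.of_forall fun x => hS0 _)
              rw [hsec]
              exact hcont.integrable_indicator measurableSet_Icc
          _ = Φ y := by
              rw [hsec, integral_indicator measurableSet_Icc, integral_Icc_eq_integral_Ioc,
                ← intervalIntegral.integral_of_le (by linarith), hint y hy.1]
    _ = ∫ y in (0:ℝ)..ε₁, Φ y := by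
        rw [intervalIntegral.integral_of_le hε₁.le, integral_Ioc_eq_integral_Ioo]

lemma integral_tent_sq_s7 (x₀ s c : ℝ) (hs : 0 ≤ s) :
    ∫ x in (x₀ - s)..(x₀ + s), c ^ 2 * (s - |x - x₀|) ^ 2 = 2 * c ^ 2 * s ^ 3 / 3 := by
  have hc : Continuous fun x : ℝ => c ^ 2 * (s - |x - x₀|) ^ 2 := by fun_prop
  rw [← intervalIntegral.integral_add_adjacent_intervals (b := x₀)
    (hc.intervalIntegrable _ _) (hc.intervalIntegrable _ _)]
  have h1 : ∫ x in (x₀ - s)..x₀, c ^ 2 * (s - |x - x₀|) ^ 2 = c ^ 2 * s ^ 3 / 3 := by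
    rw [intervalIntegral.integral_congr (g := fun x => c ^ 2 * (s + (x - x₀)) ^ 2)]
    · rw [intervalIntegral.integral_eq_sub_of_hasDerivAt
        (f := fun x => c ^ 2 * (s + (x - x₀)) ^ 3 / 3)]
      · ring
      · intro x _
        have := (((((hasDerivAt_id x).sub_const x₀).const_add s).pow 3).const_mul (c ^ 2)).div_const 3
        exact this.congr_deriv (by norm_num <;> ring)
      · exact Continuous.intervalIntegrable (by fun_prop) _ _
    · intro x hx
      rw [Set.uIcc_of_le (by linarith)] at hx
      simp only
      rw [abs_of_nonpos (by linarith [hx.2])]; ring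
  have h2 : ∫ x in x₀..(x₀ + s), c ^ 2 * (s - |x - x₀|) ^ 2 = c ^ 2 * s ^ 3 / 3 := by
    rw [intervalIntegral.integral_congr (g := fun x => c ^ 2 * (s - (x - x₀)) ^ 2)]
    · rw [intervalIntegral.integral_eq_sub_of_hasDerivAt
        (f := fun x => -(c ^ 2 * (s - (x - x₀)) ^ 3 / 3))]
      · ring
      · intro x _
        have := ((((((hasDerivAt_id x).sub_const x₀).const_sub s).pow 3).const_mul
          (c ^ 2)).div_const 3).neg
        exact this.congr_deriv (by norm_num <;> ring)
      · exact Continuous.intervalIntegrable (by fun_prop) _ _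
    · intro x hx
      rw [Set.uIcc_of_le (by linarith)] at hx
      simp only
      rw [abs_of_nonneg (by linarith [hx.1])]
  rw [h1, h2]; ring

/-- Lemma A.1: the graph-norm error of `p₁` against `b` on `(0,1) × (0,ε₁)` satisfies
`( ∫ (b - p₁)² + ∫ (b_β - v₂·D)² )^{1/2} ≤ √(ε₁³/24 + B²/4) · |d| · √(ε₁ ε₂)`. -/
theorem graph_norm_b_p1 (x₀ ε₁ ε₂ d c B : ℝ) (hx₀ : x₀ ∈ Set.Ioo (0:ℝ) 1)
    (hε₁ : 0 < ε₁) (hε₁' : ε₁ ≤ 1) (hε₂ : 0 < ε₂) (hc : c = d / (2 * ε₂))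
    (hmin : ε₂ * ε₁ ≤ min x₀ (1 - x₀))
    (v₂ : ℝ → ℝ → ℝ) (hv₂m : Measurable fun q : ℝ × ℝ => v₂ q.1 q.2)
    (hv₂B : ∀ x y : ℝ, |v₂ x y| ≤ B)
    (b p₁ bβ D : ℝ → ℝ → ℝ)
    (hb : ∀ x y : ℝ, b x y = if x < x₀ then d * y else 0)
    (hp₁ : ∀ x y : ℝ,
      p₁ x y = -c * max (x₀ - x - ε₂ * y) 0 + c * max (x₀ - x + ε₂ * y) 0)
    (hbβ : ∀ x y : ℝ, bβ x y = if x < x₀ then d * v₂ x y else 0)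
    (hD : ∀ x y : ℝ, D x y = (d / 2) * ((if x < x₀ - ε₂ * y then (1:ℝ) else 0) +
      (if x < x₀ + ε₂ * y then (1:ℝ) else 0))) :
    Real.sqrt ((∫ q in Set.Ioo (0:ℝ) 1 ×ˢ Set.Ioo (0:ℝ) ε₁,
          (b q.1 q.2 - p₁ q.1 q.2) ^ 2) +
        ∫ q in Set.Ioo (0:ℝ) 1 ×ˢ Set.Ioo (0:ℝ) ε₁,
          (bβ q.1 q.2 - v₂ q.1 q.2 * D q.1 q.2) ^ 2) ≤
      Real.sqrt (ε₁ ^ 3 / 24 + B ^ 2 / 4) * |d| * Real.sqrt (ε₁ * ε₂) := by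
  have hdc : d = 2 * ε₂ * c := by rw [hc]; field_simp
  have key1 : ∫ q in Set.Ioo (0:ℝ) 1 ×ˢ Set.Ioo (0:ℝ) ε₁, (b q.1 q.2 - p₁ q.1 q.2) ^ 2
      ≤ d ^ 2 * ε₂ * ε₁ ^ 4 / 24 := by
    refine (setIntegral_le_of_strip x₀ ε₁ ε₂ hε₁ hε₂ _
      (fun q => c ^ 2 * (ε₂ * q.2 - |q.1 - x₀|) ^ 2)
      (fun y => 2 * c ^ 2 * (ε₂ * y) ^ 3 / 3) (by fun_prop) (by fun_prop)
      (fun q => by positivity) (fun q => sq_nonneg _) ?_ ?_).trans ?_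
    · rintro ⟨x, y⟩ hy
      have hs : 0 < ε₂ * y := mul_pos hε₂ hy
      have hdy : d * y = 2 * c * (ε₂ * y) := by rw [hdc]; ring
      simp only [hb, hp₁, hdy, Set.indicator, Set.mem_ofPred_eq]
      generalize ε₂ * y = s at hs
      apply le_of_eq
      rcases lt_or_ge x x₀ with hx | hx
      · rw [if_pos hx, abs_of_neg (by linarith), max_eq_left (by linarith : 0 ≤ x₀ - x + s)]
        split_ifs with h
        · rw [max_eq_right (by linarith)]; ring
        · rw [max_eq_left (by linarith)]; ring
      · rw [if_neg (not_lt.2 hx), abs_of_nonneg (by linarith),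
          max_eq_right (by linarith : x₀ - x - s ≤ 0)]
        split_ifs with h
        · rw [max_eq_left (by linarith)]; ring
        · rw [max_eq_right (by linarith)]; ring
    · intro y hy
      exact integral_tent_sq_s7 x₀ (ε₂ * y) c (mul_pos hε₂ hy).le
    · have : (fun y : ℝ => 2 * c ^ 2 * (ε₂ * y) ^ 3 / 3) =
          fun y => (2 * c ^ 2 * ε₂ ^ 3 / 3) * y ^ 3 := by ext y; ring
      rw [this, intervalIntegral.integral_const_mul, integral_pow, hdc]
      apply le_of_eq
      norm_num
      ring
  have key2 : ∫ q in Set.Ioo (0:ℝ) 1 ×ˢ Set.Ioo (0:ℝ) ε₁,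
      (bβ q.1 q.2 - v₂ q.1 q.2 * D q.1 q.2) ^ 2 ≤ d ^ 2 * B ^ 2 / 4 * ε₂ * ε₁ ^ 2 := by
    refine (setIntegral_le_of_strip x₀ ε₁ ε₂ hε₁ hε₂ _
      (fun _ => d ^ 2 * B ^ 2 / 4)
      (fun y => (d ^ 2 * B ^ 2 / 2 * ε₂) * y) (by fun_prop) (by fun_prop)
      (fun q => by positivity) (fun q => sq_nonneg _) ?_ ?_).trans ?_
    · rintro ⟨x, y⟩ hy
      have hs : 0 < ε₂ * y := mul_pos hε₂ hy
      have hv : d ^ 2 * v₂ x y ^ 2 ≤ d ^ 2 * B ^ 2 :=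
        mul_le_mul_of_nonneg_left (sq_le_sq.2 ((hv₂B x y).trans (le_abs_self B))) (sq_nonneg d)
      simp only [hbβ, hD, Set.indicator, Set.mem_ofPred_eq]
      generalize ε₂ * y = s at hs
      generalize v₂ x y = v at hv
      by_cases h : |x - x₀| ≤ s
      · obtain ⟨h1, h2⟩ := abs_le.1 h
        rw [if_pos h, if_neg (by linarith : ¬ x < x₀ - s)]
        rcases lt_or_ge x x₀ with hx | hx
        · rw [if_pos hx, if_pos (by linarith)]; nlinarith
        · rw [if_neg (not_lt.2 hx)]
          split_ifs <;> nlinarith [sq_nonneg (d * B)]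
      · rw [if_neg h]
        apply le_of_eq
        rcases lt_or_ge x x₀ with hx | hx
        · rw [abs_of_neg (by linarith)] at h
          rw [if_pos hx, if_pos (by linarith), if_pos (by linarith)]; ring
        · rw [abs_of_nonneg (by linarith)] at h
          rw [if_neg (by linarith), if_neg (by linarith), if_neg (by linarith)]; ring
    · intro y hy
      rw [intervalIntegral.integral_const, smul_eq_mul]; ring
    · rw [intervalIntegral.integral_const_mul, integral_id]
      apply le_of_eq
      ring
  rw [← Real.sqrt_sq_eq_abs, ← Real.sqrt_mul (by positivity), ← Real.sqrt_mul (by positivity)]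
  refine Real.sqrt_le_sqrt ((add_le_add key1 key2).trans ?_)
  have h : d ^ 2 * B ^ 2 / 4 * ε₂ * ε₁ ^ 2 ≤ d ^ 2 * B ^ 2 / 4 * ε₂ * ε₁ :=
    mul_le_mul_of_nonneg_left (by nlinarith) (by positivity)
  nlinarith
end

section
/- (Lemma A.2 of the paper.) Assume 0 < ε₁ ≤ 1 and 0 < ε₂ ≤ min(x₀, 1 − x₀). Let B > 0, let v₂, γ : ℝ² → ℝ be measurable with |v₂(x,y)| ≤ B, let u₁, u₂ : [0,x₀] × [0,ε₁] → ℝ be continuous, differentiable in y on the open rectangle Ω₁ = (0,x₀) × (0,ε₁), and satisfy the transport relation v₂(x,y)·∂_y(u₁ − u₂)(x,y) = γ(x,y)·( u₂(x,y) − u₁(x,y) ) on Ω₁; assume γ is bounded on Ω₁. Set d = ( u₁(0,ε₁) − u₂(0,ε₁) − 1 ) / ε₁ and c = d/(2ε₂). Define χ(x,y) = u₁(x,y) − u₂(x,y) for 0 < x < x₀ and χ(x,y) = 0 for x ≥ x₀, and χ_β(x,y) = γ(x,y)·( u₂(x,y) − u₁(x,y) ) for 0 < x < x₀ and χ_β(x,y)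 = 0 for x ≥ x₀. With b, p₁ as specified, p₀(x,y) = ( max(x₀ + ε₂ − x, 0) − max(x₀ − ε₂ − x, 0) ) / (2ε₂), and D(x,y) = (d/2)·( 𝟙[x < x₀ − ε₂·y] + 𝟙[x < x₀ + ε₂·y] ) (the almost-everywhere y-partial derivative of p₀ + p₁), one has ( ∫_{(0,1)×(0,ε₁)} ( χ − (p₀ + p₁) )² dx dy + ∫_{(0,1)×(0,ε₁)} ( χ_β − v₂·D )² dx dy )^{1/2} ≤ C₁·√(ε₁·ε₂) + C₂·√ε₁, where C₁ = 1/√6 + |d|·√(ε₁³/24 + B²/4) and C₂ = √( x₀·( S₁ + S₂ ) ) with S₁ = sup_{(x,y) ∈ Ω₁} ( u₁(x,y) − u₂(x,y) − 1 − b(x,y) )² and S₂ = sup_{(x,y) ∈ Ω₁} ( 2·γ(x,y)²·( u₂(x,y) − u₁(x,y) )² + 2·(d·B)² ). -/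
open MeasureTheory

/-!
On `x < x₀` write `χ - (p₀ + p₁) = (χ - 1 - b) + (1 - p₀) + (b - p₁)`, and on `x ≥ x₀` drop the
first summand and replace `1` and `b` by `0`.  The first summand is at most `√S₁` in absolute
value, and the other two are multiples of the error made by replacing a jump at `x₀` by a ramp of
half-width `δ` (`δ = ε₂` for `p₀`, `δ = ε₂ y` for `p₁`).  That error is dominated by the tent
`max (δ - |x - x₀|) 0` (`abs_step_sub_ramp_le`), whose square has integral `2 δ³ / 3`
(`integral_tent_sq_le`).  Minkowski's inequality (`integral_add_three_sq_le`) bounds the first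
integral by `(α + β + κ)²`, where `α² = ε₁ x₀ S₁`, `β² = ε₁ ε₂ / 6` and
`κ² = d² ε₂ ε₁⁴ / 24`.

The second integrand is at most `S₂` on `x < x₀`, at most `(B d / 2)²` for `x₀ ≤ x < x₀ + ε₂`, and
zero beyond, so its integral is at most `σ² + τ²` with `σ² = ε₁ x₀ S₂` and
`τ² = ε₁ ε₂ d² B² / 4`.  Since `σ² + τ² ≤ (σ + τ)²`, the triangle inequality in
`ℝ²` for `(α, σ) + (β, 0) + (κ, τ)` (`sqrt_add_le_of_blocks`) gives the bound
`√(α² + σ²) + β + √(κ² + τ²)`, which is the right-hand side.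
-/

/-- The error of a ramp of half-width `δ` against the step of height `2 δ` at `x₀` is dominated by
a tent. -/
lemma abs_step_sub_ramp_le (x₀ δ x : ℝ) (hδ : 0 ≤ δ) :
    |(if x < x₀ then 2 * δ else 0) - (max (x₀ + δ - x) 0 - max (x₀ - δ - x) 0)|
      ≤ max (δ - |x - x₀|) 0 := by
  rcases max_cases (x₀ + δ - x) 0 with ⟨h1, h1'⟩ | ⟨h1, h1'⟩ <;>
  rcases max_cases (x₀ - δ - x) 0 with ⟨h2, h2'⟩ | ⟨h2, h2'⟩ <;>
  rcases max_cases (δ - |x - x₀|) 0 with ⟨h3, h3'⟩ | ⟨h3, h3'⟩ <;>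
  rcases abs_cases (x - x₀) with ⟨h4, h4'⟩ | ⟨h4, h4'⟩ <;>
  rw [h1, h2, h3] <;> split_ifs <;> rw [abs_le] <;> constructor <;> linarith

lemma integral_tent_sq_le (x₀ δ : ℝ) (hδ : 0 ≤ δ) (s : Set ℝ) :
    ∫ x in s, (max (δ - |x - x₀|) 0) ^ 2 ≤ 2 * δ ^ 3 / 3 := by
  have hcont : Continuous fun x : ℝ => (max (δ - |x - x₀|) 0) ^ 2 := by fun_prop
  have hsupp : ∀ x, x ∉ Set.Icc (x₀ - δ) (x₀ + δ) → (max (δ - |x - x₀|) 0) ^ 2 = 0 := by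
    intro x hx
    have : δ ≤ |x - x₀| := by
      by_contra! h
      rw [abs_lt] at h
      exact hx ⟨by linarith, by linarith⟩
    rw [max_eq_right (by linarith)]; norm_num
  have hint : Integrable fun x : ℝ => (max (δ - |x - x₀|) 0) ^ 2 :=
    hcont.integrable_of_hasCompactSupport (HasCompactSupport.intro isCompact_Icc hsupp)
  calc ∫ x in s, (max (δ - |x - x₀|) 0) ^ 2
      ≤ ∫ x, (max (δ - |x - x₀|) 0) ^ 2 :=
        setIntegral_le_integral hint (Filter.Eventually.of_forall fun x => by positivity)
    _ = ∫ x in Set.Icc (x₀ - δ) (x₀ + δ), (max (δ - |x - x₀|) 0) ^ 2 :=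
        (setIntegral_eq_integral_of_forall_compl_eq_zero hsupp).symm
    _ = ∫ x in (x₀ - δ)..(x₀ + δ), (max (δ - |x - x₀|) 0) ^ 2 := by
        rw [intervalIntegral.integral_of_le (by linarith), integral_Icc_eq_integral_Ioc]
    _ = (∫ x in (x₀ - δ)..x₀, (max (δ - |x - x₀|) 0) ^ 2)
        + ∫ x in x₀..(x₀ + δ), (max (δ - |x - x₀|) 0) ^ 2 :=
        (intervalIntegral.integral_add_adjacent_intervals (hcont.intervalIntegrable _ _)
          (hcont.intervalIntegrable _ _)).symm
    _ = (∫ x in (x₀ - δ)..x₀, (x - (x₀ - δ)) ^ 2) + ∫ x in x₀..(x₀ + δ), (x - (x₀ + δ)) ^ 2 := by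
        congr 1
        · apply intervalIntegral.integral_congr
          intro x hx
          rw [Set.uIcc_of_le (by linarith)] at hx
          simp only
          rw [abs_of_nonpos (by linarith [hx.2]), max_eq_left (by linarith [hx.1])]; ring
        · apply intervalIntegral.integral_congr
          intro x hx
          rw [Set.uIcc_of_le (by linarith)] at hx
          simp only
          rw [abs_of_nonneg (by linarith [hx.1]), max_eq_left (by linarith [hx.2])]; ring
    _ = 2 * δ ^ 3 / 3 := by
        rw [intervalIntegral.integral_comp_sub_right (fun x => x ^ 2),
          intervalIntegral.integral_comp_sub_right (fun x => x ^ 2), integral_pow, integral_pow]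
        push_cast; ring
    _ ≤ _ := le_rfl

/-- Minkowski's inequality in `L²`, with the norms replaced by upper bounds. -/
lemma integral_add_sq_le {X : Type*} [MeasurableSpace X] (μ : Measure X) (f g : X → ℝ)
    (hf : MemLp f 2 μ) (hg : MemLp g 2 μ) (α β : ℝ) (hα : 0 ≤ α) (hβ : 0 ≤ β)
    (hfα : ∫ z, f z ^ 2 ∂μ ≤ α ^ 2) (hgβ : ∫ z, g z ^ 2 ∂μ ≤ β ^ 2) :
    ∫ z, (f z + g z) ^ 2 ∂μ ≤ (α + β) ^ 2 := by
  have hff := hf.integrable_sq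
  have hgg := hg.integrable_sq
  have hfg : Integrable (fun z => f z * g z) μ := hf.integrable_mul hg
  have key : ∀ s t : ℝ, ∫ z, (s * f z + t * g z) ^ 2 ∂μ
      = s ^ 2 * ∫ z, f z ^ 2 ∂μ + 2 * s * t * ∫ z, f z * g z ∂μ + t ^ 2 * ∫ z, g z ^ 2 ∂μ := by
    intro s t
    rw [← integral_const_mul, ← integral_const_mul, ← integral_const_mul,
      ← integral_add (hff.const_mul _) (hfg.const_mul _),
      ← integral_add (by exact (hff.const_mul _).add (hfg.const_mul _)) (hgg.const_mul _)]
    congr 1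
    ext z
    ring
  -- Cauchy–Schwarz, from nonnegativity of the quadratic `∫ (s f + g)²`.
  have hcs : (∫ z, f z * g z ∂μ) ^ 2 ≤ (∫ z, f z ^ 2 ∂μ) * ∫ z, g z ^ 2 ∂μ := by
    have h : ∀ s : ℝ, 0 ≤ (∫ z, f z ^ 2 ∂μ) * (s * s) + (2 * ∫ z, f z * g z ∂μ) * s
        + ∫ z, g z ^ 2 ∂μ := by
      intro s
      have h1 := key s 1
      have h2 : 0 ≤ ∫ z, (s * f z + 1 * g z) ^ 2 ∂μ := integral_nonneg fun z => sq_nonneg _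
      nlinarith
    have := discrim_le_zero h
    unfold discrim at this
    linarith
  have h1 := key 1 1
  simp only [one_mul] at h1
  have hg0 : 0 ≤ ∫ z, g z ^ 2 ∂μ := integral_nonneg fun z => sq_nonneg _
  have hfg' : ∫ z, f z * g z ∂μ ≤ α * β := by
    apply le_of_sq_le_sq ?_ (by positivity)
    calc _ ≤ _ := hcs
      _ ≤ α ^ 2 * β ^ 2 := by gcongr
      _ = _ := by ring
  rw [h1]
  nlinarith

lemma integral_add_three_sq_le {X : Type*} [MeasurableSpace X] (μ : Measure X) (f g h : X → ℝ)
    (hf : MemLp f 2 μ) (hg : MemLp g 2 μ) (hh : MemLp h 2 μ)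
    (α β κ : ℝ) (hα : 0 ≤ α) (hβ : 0 ≤ β) (hκ : 0 ≤ κ)
    (hfα : ∫ z, f z ^ 2 ∂μ ≤ α ^ 2) (hgβ : ∫ z, g z ^ 2 ∂μ ≤ β ^ 2)
    (hhκ : ∫ z, h z ^ 2 ∂μ ≤ κ ^ 2) :
    ∫ z, (f z + g z + h z) ^ 2 ∂μ ≤ (α + β + κ) ^ 2 :=
  integral_add_sq_le μ (fun z => f z + g z) h (hf.add hg) hh (α + β) κ (by positivity) hκ
    (integral_add_sq_le μ f g hf hg α β hα hβ hfα hgβ) hhκ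

/-- Triangle inequality in `ℝ²` for the vectors `(α, |σ|)`, `(β, 0)` and `(κ, |τ|)`, together with
`σ² + τ² ≤ (|σ| + |τ|)²`. -/
lemma sqrt_add_le_of_blocks (I J α β κ σ τ : ℝ) (hβ : 0 ≤ β)
    (hI : I ≤ (α + β + κ) ^ 2) (hJ : J ≤ σ ^ 2 + τ ^ 2) :
    √(I + J) ≤ √(α ^ 2 + σ ^ 2) + β + √(κ ^ 2 + τ ^ 2) := by
  have hp := Real.sqrt_nonneg (α ^ 2 + σ ^ 2)
  have hq := Real.sqrt_nonneg (κ ^ 2 + τ ^ 2)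
  have hp2 := Real.sq_sqrt (show 0 ≤ α ^ 2 + σ ^ 2 by positivity)
  have hq2 := Real.sq_sqrt (show 0 ≤ κ ^ 2 + τ ^ 2 by positivity)
  set P := √(α ^ 2 + σ ^ 2)
  set Q := √(κ ^ 2 + τ ^ 2)
  have hαP : α ≤ P := Real.le_sqrt_of_sq_le (by nlinarith)
  have hκQ : κ ≤ Q := Real.le_sqrt_of_sq_le (by nlinarith)
  have hPQ : α * κ ≤ P * Q := by
    apply le_of_sq_le_sq ?_ (by positivity)
    rw [mul_pow, mul_pow, hp2, hq2]
    nlinarith [mul_nonneg (sq_nonneg α) (sq_nonneg τ), mul_nonneg (sq_nonneg σ) (sq_nonneg κ),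
      mul_nonneg (sq_nonneg σ) (sq_nonneg τ)]
  apply Real.sqrt_le_iff.2 ⟨by positivity, ?_⟩
  nlinarith [mul_le_mul_of_nonneg_right hαP hβ, mul_le_mul_of_nonneg_right hκQ hβ]

/-- Fubini on the rectangle, with `x` integrated first and the inner integral bounded by `φ`. -/
lemma setIntegral_rect_le (ε₁ : ℝ) (hε₁ : 0 < ε₁) (f : ℝ × ℝ → ℝ) (φ : ℝ → ℝ)
    (hφ : Continuous φ) (hf0 : ∀ q, 0 ≤ f q)
    (hf : Integrable f (volume.restrict (Set.Ioo (0:ℝ) 1 ×ˢ Set.Ioo (0:ℝ) ε₁)))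
    (h : ∀ y ∈ Set.Ioo 0 ε₁, ∫ x in Set.Ioo (0:ℝ) 1, f (x, y) ≤ φ y) :
    ∫ q in Set.Ioo (0:ℝ) 1 ×ˢ Set.Ioo (0:ℝ) ε₁, f q ≤ ∫ y in (0:ℝ)..ε₁, φ y := by
  rw [Measure.volume_eq_prod, ← Measure.prod_restrict] at hf ⊢
  rw [integral_prod_symm f hf, intervalIntegral.integral_of_le hε₁.le,
    integral_Ioc_eq_integral_Ioo]
  apply integral_mono_of_nonneg
  · exact Filter.Eventually.of_forall fun y => integral_nonneg fun x => hf0 _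
  · exact (hφ.integrableOn_Icc (a := 0) (b := ε₁)).mono_set Set.Ioo_subset_Icc_self
  · exact (ae_restrict_iff' measurableSet_Ioo).2 (Filter.Eventually.of_forall h)

set_option maxHeartbeats 1000000 in
/-- Lemma A.2: graph-norm error bound for the CPWL approximation `p₀ + p₁` of the
discontinuous function `χ` with non-constant jump, on `(0,1) × (0,ε₁)`. -/
theorem chi_graph_norm_bound (x₀ ε₁ ε₂ B : ℝ) (hx₀ : x₀ ∈ Set.Ioo (0:ℝ) 1)
    (hε₁ : 0 < ε₁) (hε₁' : ε₁ ≤ 1) (hε₂ : 0 < ε₂) (hε₂' : ε₂ ≤ min x₀ (1 - x₀))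
    (hB : 0 < B)
    (v₂ γ : ℝ → ℝ → ℝ)
    (hv₂m : Measurable fun q : ℝ × ℝ => v₂ q.1 q.2)
    (hγm : Measurable fun q : ℝ × ℝ => γ q.1 q.2)
    (hv₂B : ∀ x y : ℝ, |v₂ x y| ≤ B)
    (hγbdd : ∃ M, ∀ x ∈ Set.Ioo 0 x₀, ∀ y ∈ Set.Ioo 0 ε₁, |γ x y| ≤ M)
    (u₁ u₂ : ℝ → ℝ → ℝ)
    (hu₁c : ContinuousOn (fun q : ℝ × ℝ => u₁ q.1 q.2) (Set.Icc 0 x₀ ×ˢ Set.Icc 0 ε₁))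
    (hu₂c : ContinuousOn (fun q : ℝ × ℝ => u₂ q.1 q.2) (Set.Icc 0 x₀ ×ˢ Set.Icc 0 ε₁))
    (hdiff : ∀ x ∈ Set.Ioo 0 x₀, ∀ y ∈ Set.Ioo 0 ε₁,
      DifferentiableAt ℝ (fun t => u₁ x t) y ∧ DifferentiableAt ℝ (fun t => u₂ x t) y)
    (htrans : ∀ x ∈ Set.Ioo 0 x₀, ∀ y ∈ Set.Ioo 0 ε₁,
      v₂ x y * deriv (fun t => u₁ x t - u₂ x t) y = γ x y * (u₂ x y - u₁ x y))
    (d c : ℝ)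
    (hd : d = (u₁ 0 ε₁ - u₂ 0 ε₁ - 1) / ε₁) (hc : c = d / (2 * ε₂))
    (χ χβ b p₀ p₁ D : ℝ → ℝ → ℝ)
    (hχ₁ : ∀ x y : ℝ, 0 < x → x < x₀ → χ x y = u₁ x y - u₂ x y)
    (hχ₂ : ∀ x y : ℝ, x₀ ≤ x → χ x y = 0)
    (hχβ₁ : ∀ x y : ℝ, 0 < x → x < x₀ → χβ x y = γ x y * (u₂ x y - u₁ x y))
    (hχβ₂ : ∀ x y : ℝ, x₀ ≤ x → χβ x y = 0)
    (hb : ∀ x y : ℝ, b x y = if x < x₀ then d * y else 0)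
    (hp₀ : ∀ x y : ℝ,
      p₀ x y = (max (x₀ + ε₂ - x) 0 - max (x₀ - ε₂ - x) 0) / (2 * ε₂))
    (hp₁ : ∀ x y : ℝ,
      p₁ x y = -c * max (x₀ - x - ε₂ * y) 0 + c * max (x₀ - x + ε₂ * y) 0)
    (hD : ∀ x y : ℝ, D x y = (d / 2) * ((if x < x₀ - ε₂ * y then (1:ℝ) else 0) +
      (if x < x₀ + ε₂ * y then (1:ℝ) else 0)))
    (S₁ S₂ C₁ C₂ : ℝ)
    (hS₁ : S₁ = sSup ((fun q : ℝ × ℝ =>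
      (u₁ q.1 q.2 - u₂ q.1 q.2 - 1 - b q.1 q.2) ^ 2) ''
        (Set.Ioo 0 x₀ ×ˢ Set.Ioo 0 ε₁)))
    (hS₂ : S₂ = sSup ((fun q : ℝ × ℝ =>
      2 * (γ q.1 q.2) ^ 2 * (u₂ q.1 q.2 - u₁ q.1 q.2) ^ 2 + 2 * (d * B) ^ 2) ''
        (Set.Ioo 0 x₀ ×ˢ Set.Ioo 0 ε₁)))
    (hC₁ : C₁ = 1 / Real.sqrt 6 + |d| * Real.sqrt (ε₁ ^ 3 / 24 + B ^ 2 / 4))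
    (hC₂ : C₂ = Real.sqrt (x₀ * (S₁ + S₂))) :
    Real.sqrt ((∫ q in Set.Ioo (0:ℝ) 1 ×ˢ Set.Ioo (0:ℝ) ε₁,
          (χ q.1 q.2 - (p₀ q.1 q.2 + p₁ q.1 q.2)) ^ 2) +
        ∫ q in Set.Ioo (0:ℝ) 1 ×ˢ Set.Ioo (0:ℝ) ε₁,
          (χβ q.1 q.2 - v₂ q.1 q.2 * D q.1 q.2) ^ 2) ≤
      C₁ * Real.sqrt (ε₁ * ε₂) + C₂ * Real.sqrt ε₁ := by
  obtain ⟨hx0, hx1⟩ := hx₀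
  set R : Set (ℝ × ℝ) := Set.Ioo (0:ℝ) 1 ×ˢ Set.Ioo (0:ℝ) ε₁ with hR
  have hRm : MeasurableSet R := measurableSet_Ioo.prod measurableSet_Ioo
  have : IsFiniteMeasure (volume.restrict R) := by
    rw [hR, Measure.volume_eq_prod, ← Measure.prod_restrict]
    infer_instance
  -- The suprema `S₁`, `S₂` are taken over bounded sets, so they are genuine upper bounds.
  have huc := hu₁c.sub hu₂c
  obtain ⟨M, hM⟩ := hγbdd
  obtain ⟨N, hN⟩ := (isCompact_Icc.prod isCompact_Icc).exists_bound_of_continuousOn huc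
  have hN' : ∀ x ∈ Set.Ioo 0 x₀, ∀ y ∈ Set.Ioo 0 ε₁, |u₁ x y - u₂ x y| ≤ N := fun x hx y hy =>
    hN (x, y) ⟨Set.Ioo_subset_Icc_self hx, Set.Ioo_subset_Icc_self hy⟩
  have hS₁le : ∀ x ∈ Set.Ioo 0 x₀, ∀ y ∈ Set.Ioo 0 ε₁,
      (u₁ x y - u₂ x y - 1 - d * y) ^ 2 ≤ S₁ := by
    intro x hx y hy
    rw [hS₁]
    have hbd : BddAbove ((fun q : ℝ × ℝ => (u₁ q.1 q.2 - u₂ q.1 q.2 - 1 - b q.1 q.2) ^ 2) ''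
        (Set.Ioo 0 x₀ ×ˢ Set.Ioo 0 ε₁)) := by
      refine ⟨(N + 1 + |d|) ^ 2, ?_⟩
      rintro _ ⟨⟨s, t⟩, ⟨hs, ht⟩, rfl⟩
      simp only at hs ht ⊢
      rw [hb, if_pos hs.2, ← sq_abs (u₁ s t - u₂ s t - 1 - d * t)]
      gcongr
      have h1 := hN' s hs t ht
      have h2 : |d * t| ≤ |d| := by
        rw [abs_mul, abs_of_pos ht.1]
        exact mul_le_of_le_one_right (abs_nonneg d) (ht.2.le.trans hε₁')
      calc |u₁ s t - u₂ s t - 1 - d * t| ≤ |u₁ s t - u₂ s t - 1| + |d * t| := abs_sub _ _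
        _ ≤ |u₁ s t - u₂ s t| + |1| + |d * t| := by gcongr; exact abs_sub _ _
        _ ≤ N + 1 + |d| := by rw [abs_one]; gcongr
    have := le_csSup hbd ⟨(x, y), ⟨hx, hy⟩, rfl⟩
    simp only [hb, if_pos hx.2] at this ⊢
    exact this
  have hS₂le : ∀ x ∈ Set.Ioo 0 x₀, ∀ y ∈ Set.Ioo 0 ε₁,
      2 * (γ x y) ^ 2 * (u₂ x y - u₁ x y) ^ 2 + 2 * (d * B) ^ 2 ≤ S₂ := by
    intro x hx y hy
    rw [hS₂]
    refine le_csSup ⟨2 * M ^ 2 * N ^ 2 + 2 * (d * B) ^ 2, ?_⟩ ⟨(x, y), ⟨hx, hy⟩, rfl⟩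
    rintro _ ⟨⟨s, t⟩, ⟨hs, ht⟩, rfl⟩
    simp only at hs ht ⊢
    have h1 := hN' s hs t ht
    have h2 := hM s hs t ht
    rw [← sq_abs (γ s t), ← sq_abs (u₂ s t - u₁ s t), abs_sub_comm (u₂ s t)]
    gcongr
  have hmid : x₀ / 2 ∈ Set.Ioo 0 x₀ := ⟨by linarith, by linarith⟩
  have hmidy : ε₁ / 2 ∈ Set.Ioo 0 ε₁ := ⟨by linarith, by linarith⟩
  have hS₁0 : 0 ≤ S₁ := (sq_nonneg _).trans (hS₁le _ hmid _ hmidy)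
  have hS₂0 : 0 ≤ S₂ := le_trans (by positivity) (hS₂le _ hmid _ hmidy)
  -- Majorants for the three parts of `χ - (p₀ + p₁)`; measurability of `χ` is then not needed.
  let A : ℝ × ℝ → ℝ := fun q => if q.1 < x₀ then √S₁ else 0
  let E : ℝ × ℝ → ℝ := fun q => max (ε₂ - |q.1 - x₀|) 0 / (2 * ε₂)
  let F : ℝ × ℝ → ℝ := fun q => |c| * max (ε₂ * q.2 - |q.1 - x₀|) 0
  have hA : MemLp A 2 (volume.restrict R) := by
    refine MemLp.of_bound (Measurable.aestronglyMeasurable ?_) (√S₁)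
      (Filter.Eventually.of_forall fun q => ?_)
    · exact Measurable.ite (measurableSet_lt measurable_fst measurable_const) measurable_const
        measurable_const
    · simp only [A]
      split_ifs
      · rw [Real.norm_of_nonneg (Real.sqrt_nonneg _)]
      · simp
  have hE : MemLp E 2 (volume.restrict R) := by
    refine MemLp.of_bound (Continuous.aestronglyMeasurable (by fun_prop)) (ε₂ / (2 * ε₂))
      (Filter.Eventually.of_forall fun q => ?_)
    simp only [E]
    rw [Real.norm_of_nonneg (by positivity)]
    gcongr
    exact max_le (by linarith [abs_nonneg (q.1 - x₀)]) hε₂.le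
  have hF : MemLp F 2 (volume.restrict R) := by
    refine MemLp.of_bound (Continuous.aestronglyMeasurable (by fun_prop)) (|c| * ε₂)
      ((ae_restrict_iff' hRm).2 (Filter.Eventually.of_forall fun q hq => ?_))
    simp only [F]
    rw [Real.norm_of_nonneg (by positivity)]
    gcongr
    have : ε₂ * q.2 ≤ ε₂ := mul_le_of_le_one_right hε₂.le (hq.2.2.le.trans hε₁')
    exact max_le (by linarith [abs_nonneg (q.1 - x₀)]) hε₂.le
  have hstep : ∀ (K : ℝ) (a b : ℝ), 0 ≤ K → a ≤ b →
      ∫ x in Set.Ioo (0:ℝ) 1, (Set.Ico a b).indicator (fun _ => K) x ≤ (b - a) * K := by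
    intro K a b hK hab
    calc _ ≤ ∫ x, (Set.Ico a b).indicator (fun _ => K) x :=
          setIntegral_le_integral
            ((integrable_indicator_iff measurableSet_Ico).2 (integrableOn_const (by simp)))
            (Filter.Eventually.of_forall fun x => Set.indicator_nonneg (fun _ _ => hK) x)
      _ = (b - a) * K := by
          rw [integral_indicator measurableSet_Ico, setIntegral_const, smul_eq_mul,
            Real.volume_real_Ico_of_le hab]
  have hA2 : ∫ q in R, A q ^ 2 ≤ √(ε₁ * (x₀ * S₁)) ^ 2 := by
    rw [Real.sq_sqrt (by positivity)]
    refine (setIntegral_rect_le ε₁ hε₁ _ (fun _ => x₀ * S₁) (by fun_prop)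
      (fun q => sq_nonneg _) hA.integrable_sq fun y _ => ?_).trans (by rw [intervalIntegral.integral_const]; simp)
    refine le_trans (le_of_eq ?_) ((hstep S₁ 0 x₀ hS₁0 hx0.le).trans (by simp))
    refine setIntegral_congr_fun measurableSet_Ioo fun x hx => ?_
    simp only [A, Set.indicator_apply, Set.mem_Ico, hx.1.le, true_and]
    split_ifs
    · exact Real.sq_sqrt hS₁0
    · norm_num
  have hE2 : ∫ q in R, E q ^ 2 ≤ √(ε₁ * ε₂ / 6) ^ 2 := by
    rw [Real.sq_sqrt (by positivity)]
    refine (setIntegral_rect_le ε₁ hε₁ _ (fun _ => ε₂ / 6) (by fun_prop)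
      (fun q => sq_nonneg _) hE.integrable_sq fun y _ => ?_).trans
        (by rw [intervalIntegral.integral_const, smul_eq_mul]; linarith)
    simp only [E, div_pow]
    rw [integral_div, div_le_iff₀ (by positivity)]
    exact (integral_tent_sq_le x₀ ε₂ hε₂.le _).trans (le_of_eq (by ring))
  have hF2 : ∫ q in R, F q ^ 2 ≤ √(ε₁ * ε₂ * (d ^ 2 * (ε₁ ^ 3 / 24))) ^ 2 := by
    rw [Real.sq_sqrt (by positivity)]
    refine (setIntegral_rect_le ε₁ hε₁ _ (fun y => d ^ 2 * ε₂ / 6 * y ^ 3) (by fun_prop)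
      (fun q => sq_nonneg _) hF.integrable_sq fun y hy => ?_).trans ?_
    · simp only [F, mul_pow, sq_abs]
      rw [integral_const_mul]
      calc _ ≤ c ^ 2 * (2 * (ε₂ * y) ^ 3 / 3) := by
            gcongr
            exact integral_tent_sq_le x₀ (ε₂ * y) (mul_nonneg hε₂.le hy.1.le) _
        _ = d ^ 2 * ε₂ / 6 * y ^ 3 := by rw [hc]; field_simp; ring
    · rw [intervalIntegral.integral_const_mul, integral_pow]
      apply le_of_eq; push_cast; ring
  have hI : ∫ q in R, (χ q.1 q.2 - (p₀ q.1 q.2 + p₁ q.1 q.2)) ^ 2 ≤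
      (√(ε₁ * (x₀ * S₁)) + √(ε₁ * ε₂ / 6) + √(ε₁ * ε₂ * (d ^ 2 * (ε₁ ^ 3 / 24)))) ^ 2 := by
    refine le_trans ?_ (integral_add_three_sq_le _ A E F hA hE hF _ _ _ (Real.sqrt_nonneg _)
      (Real.sqrt_nonneg _) (Real.sqrt_nonneg _) hA2 hE2 hF2)
    refine integral_mono_of_nonneg (Filter.Eventually.of_forall fun q => sq_nonneg _)
      ((hA.add hE).add hF).integrable_sq
      ((ae_restrict_iff' hRm).2 (Filter.Eventually.of_forall ?_))
    rintro ⟨x, y⟩ ⟨hx, hy⟩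
    simp only at hx hy ⊢
    have hE' : |(if x < x₀ then 1 else 0) - p₀ x y| ≤ E (x, y) := by
      have h := abs_step_sub_ramp_le x₀ ε₂ x hε₂.le
      have h2 : (if x < x₀ then 1 else 0) - p₀ x y = ((if x < x₀ then 2 * ε₂ else 0) -
          (max (x₀ + ε₂ - x) 0 - max (x₀ - ε₂ - x) 0)) / (2 * ε₂) := by
        rw [hp₀]; split_ifs <;> field_simp <;> ring
      rw [h2, abs_div, abs_of_pos (show 0 < 2 * ε₂ by positivity)]
      simp only [E]
      gcongr
    have hF' : |(if x < x₀ then d * y else 0) - p₁ x y| ≤ F (x, y) := by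
      have h := abs_step_sub_ramp_le x₀ (ε₂ * y) x (mul_nonneg hε₂.le hy.1.le)
      have h2 : (if x < x₀ then d * y else 0) - p₁ x y = c * ((if x < x₀ then 2 * (ε₂ * y) else 0) -
          (max (x₀ + ε₂ * y - x) 0 - max (x₀ - ε₂ * y - x) 0)) := by
        rw [hp₁, show x₀ - x - ε₂ * y = x₀ - ε₂ * y - x by ring,
          show x₀ - x + ε₂ * y = x₀ + ε₂ * y - x by ring]
        have : d * y = c * (2 * (ε₂ * y)) := by rw [hc]; field_simp
        split_ifs
        · rw [this]; ring
        · ring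
      rw [h2, abs_mul]
      simp only [F]
      gcongr
    have hA' : |χ x y - ((if x < x₀ then 1 else 0) + (if x < x₀ then d * y else 0))|
        ≤ A (x, y) := by
      simp only [A]
      split_ifs with hlt
      · rw [hχ₁ x y hx.1 hlt]
        apply Real.abs_le_sqrt
        rw [← sub_sub]
        exact hS₁le x ⟨hx.1, hlt⟩ y hy
      · rw [hχ₂ x y (not_lt.1 hlt)]; simp
    apply sq_le_sq'
    all_goals
      rw [abs_le] at hA' hE' hF'
      linarith [hA'.1, hA'.2, hE'.1, hE'.2, hF'.1, hF'.2]
  have hJ : ∫ q in R, (χβ q.1 q.2 - v₂ q.1 q.2 * D q.1 q.2) ^ 2 ≤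
      √(ε₁ * (x₀ * S₂)) ^ 2 + √(ε₁ * ε₂ * (d ^ 2 * (B ^ 2 / 4))) ^ 2 := by
    rw [Real.sq_sqrt (by positivity), Real.sq_sqrt (by positivity)]
    have hK : 0 ≤ d ^ 2 * (B ^ 2 / 4) := by positivity
    set K := d ^ 2 * (B ^ 2 / 4) with hKdef
    let g₁ : ℝ → ℝ := (Set.Ico 0 x₀).indicator fun _ => S₂
    let g₂ : ℝ → ℝ := (Set.Ico x₀ (x₀ + ε₂)).indicator fun _ => K
    have hg₁0 : ∀ x, 0 ≤ g₁ x := fun x => Set.indicator_nonneg (fun _ _ => hS₂0) x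
    have hg₂0 : ∀ x, 0 ≤ g₂ x := fun x => Set.indicator_nonneg (fun _ _ => hK) x
    have hg₁m : Measurable g₁ := measurable_const.indicator measurableSet_Ico
    have hg₂m : Measurable g₂ := measurable_const.indicator measurableSet_Ico
    have hg₁i : ∀ {Y : Type} [MeasurableSpace Y] (μ : Measure Y) [IsFiniteMeasure μ] (f : Y → ℝ),
        Measurable f → Integrable (fun z => g₁ (f z)) μ := fun μ _ f hf =>
      Integrable.of_bound (hg₁m.comp hf).aestronglyMeasurable S₂
        (Filter.Eventually.of_forall fun z => by
          rw [Real.norm_of_nonneg (hg₁0 _)]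
          exact Set.indicator_apply_le' (fun _ => le_rfl) (fun _ => hS₂0))
    have hg₂i : ∀ {Y : Type} [MeasurableSpace Y] (μ : Measure Y) [IsFiniteMeasure μ] (f : Y → ℝ),
        Measurable f → Integrable (fun z => g₂ (f z)) μ := fun μ _ f hf =>
      Integrable.of_bound (hg₂m.comp hf).aestronglyMeasurable K
        (Filter.Eventually.of_forall fun z => by
          rw [Real.norm_of_nonneg (hg₂0 _)]
          exact Set.indicator_apply_le' (fun _ => le_rfl) (fun _ => hK))
    have hgi : Integrable (fun q : ℝ × ℝ => g₁ q.1 + g₂ q.1) (volume.restrict R) :=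
      (hg₁i _ _ measurable_fst).add (hg₂i _ _ measurable_fst)
    calc _ ≤ ∫ q in R, (g₁ q.1 + g₂ q.1) := by
          refine integral_mono_of_nonneg (Filter.Eventually.of_forall fun q => sq_nonneg _) hgi
            ((ae_restrict_iff' hRm).2 (Filter.Eventually.of_forall ?_))
          rintro ⟨x, y⟩ ⟨hx, hy⟩
          simp only at hx hy ⊢
          have hv := hv₂B x y
          have hv2 : v₂ x y ^ 2 ≤ B ^ 2 := by rw [← sq_abs]; gcongr
          have hεy : 0 < ε₂ * y := mul_pos hε₂ hy.1
          have hεy' : ε₂ * y ≤ ε₂ := mul_le_of_le_one_right hε₂.le (hy.2.le.trans hε₁')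
          rcases lt_or_ge x x₀ with hlt | hge
          · have e1 : g₁ x = S₂ := Set.indicator_of_mem (Set.mem_Ico.2 ⟨hx.1.le, hlt⟩) _
            rw [e1]
            have hDd : D x y ^ 2 ≤ d ^ 2 := by
              rw [hD, if_pos (show x < x₀ + ε₂ * y by linarith)]
              split_ifs <;> nlinarith [sq_nonneg d]
            have hvD : (v₂ x y * D x y) ^ 2 ≤ (d * B) ^ 2 := by
              rw [mul_pow, mul_pow, mul_comm (d ^ 2)]
              gcongr
            have h2 := hS₂le x ⟨hx.1, hlt⟩ y hy
            rw [hχβ₁ x y hx.1 hlt]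
            have h3 := hg₂0 x
            have h4 := sq_nonneg (γ x y * (u₂ x y - u₁ x y) + v₂ x y * D x y)
            linear_combination h2 + h3 + h4 + 2 * hvD
          · rw [hχβ₂ x y hge, hD, if_neg (show ¬ x < x₀ - ε₂ * y by linarith)]
            split_ifs with hlt
            · have e2 : g₂ x = K := Set.indicator_of_mem (Set.mem_Ico.2 ⟨hge, by linarith⟩) _
              rw [e2, hKdef]
              have h1 := mul_le_mul_of_nonneg_left hv2 (sq_nonneg d)
              have h2 := hg₁0 x
              linear_combination h1 / 4 + h2
            · have := hg₁0 x
              have := hg₂0 x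
              norm_num
              positivity
      _ ≤ ∫ _ in (0:ℝ)..ε₁, (x₀ * S₂ + ε₂ * K) := by
          refine setIntegral_rect_le ε₁ hε₁ _ _ (by fun_prop)
            (fun q => add_nonneg (hg₁0 _) (hg₂0 _)) hgi fun y _ => ?_
          simp only
          rw [integral_add (by exact hg₁i _ _ measurable_id) (by exact hg₂i _ _ measurable_id)]
          exact add_le_add ((hstep S₂ 0 x₀ hS₂0 hx0.le).trans (by simp))
            ((hstep K x₀ (x₀ + ε₂) hK (by linarith)).trans (by simp))
      _ = _ := by simp; ring
  refine (sqrt_add_le_of_blocks _ _ _ _ _ _ _ (Real.sqrt_nonneg _) hI hJ).trans (le_of_eq ?_)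
  rw [Real.sq_sqrt (by positivity), Real.sq_sqrt (by positivity), Real.sq_sqrt (by positivity),
    Real.sq_sqrt (by positivity), hC₁, hC₂,
    show ε₁ * (x₀ * S₁) + ε₁ * (x₀ * S₂) = x₀ * (S₁ + S₂) * ε₁ by ring,
    show ε₁ * ε₂ * (d ^ 2 * (ε₁ ^ 3 / 24)) + ε₁ * ε₂ * (d ^ 2 * (B ^ 2 / 4)) =
      d ^ 2 * (ε₁ ^ 3 / 24 + B ^ 2 / 4) * (ε₁ * ε₂) by ring,
    Real.sqrt_mul (by positivity) ε₁, Real.sqrt_mul (by positivity) (ε₁ * ε₂),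
    Real.sqrt_mul (sq_nonneg d), Real.sqrt_sq_eq_abs, Real.sqrt_div (by positivity)]
  ring
end

section
/- (Theorem 3.1, ε-formulation for a cylindrical-surface jump.) Let Υ = (0,1)² ⊂ ℝ², let x₀ ∈ (0,1), let a : [0,1] → ℝ be continuously differentiable, let B > 0, and let v₂ : Υ → ℝ be measurable with |v₂(x,y)| ≤ B. Define the discontinuous function χ(x,y) = a(y) for x < x₀ and χ(x,y) = 0 for x ≥ x₀, and its directional derivative along β = (0, v₂): χ_β(x,y) = v₂(x,y)·a′(y) for x < x₀ and χ_β(x,y) = 0 for x ≥ x₀. Then for every ε > 0 there exists a CPWL function p : ℝ² → ℝ such that ( ∫_Υ ( χ − p )² dx dy + ∫_Υ ( χ_β − v₂·∂_y p )² dx dy )^{1/2} ≤ ε, where ∂_y p denotes the partial derivative of p in y at points where p is differentiable (taken to be 0 on the Lebesgue-null set where p is not differentiable). -/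
/-!
The jump function `χ` is approximated by a truncation. Let `f` be a bounded piecewise linear function
of `y` which on `[0,1]` is uniformly close to `a`, with `f'` uniformly close to `a'` off finitely many
nodes (`exists_pl_approx`: `f' = a'(i/N)` on the `i`-th cell of a fine uniform grid). If `|f| ≤ M` and
`δ > 0`, put `h(x) = max 0 (M/δ · (x₀ - x))` and
`p(x,y) = max (-h(x)) (min (h(x)) (f(y)))`.
A maximum or minimum of CPWL functions is CPWL, so `p` is CPWL, whereas the product of a ramp in `x`
with `f` would not be. Moreover `p = f` for `x ≤ x₀ - δ` and `p = 0` for `x ≥ x₀`. On the strip between,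
`|p| ≤ M`, and `|∂_y p|` is at most the Lipschitz constant `L` of `f`, because truncation is
1-Lipschitz. Both `M` and `L` are independent of `δ`, and the strip has measure at most `δ`. Hence the
total error is small once `f` is fixed close to `a` and then `δ` is taken small.
-/

open MeasureTheory

/-- `f : ℝ² → ℝ` is continuous piecewise linear (CPWL): `f` is continuous and there are
finitely many affine functions `g₁, …, g_k` such that at every point `f` agrees with some `gᵢ`. -/
def IsCPWL2 (f : ℝ × ℝ → ℝ) : Prop :=
  Continuous f ∧ ∃ (k : ℕ) (g : Fin k → ((ℝ × ℝ) →ᵃ[ℝ] ℝ)), ∀ x, ∃ i, f x = g i x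

/-! ### Closure properties of CPWL functions -/

lemma isCPWL2_of_finite {ι : Type*} [Finite ι] {f : ℝ × ℝ → ℝ} (hf : Continuous f)
    (g : ι → ((ℝ × ℝ) →ᵃ[ℝ] ℝ)) (h : ∀ x, ∃ i, f x = g i x) : IsCPWL2 f := by
  obtain ⟨n, ⟨e⟩⟩ := Finite.exists_equiv_fin ι
  refine ⟨hf, n, fun j => g (e.symm j), fun x => ?_⟩
  obtain ⟨i, hi⟩ := h x
  exact ⟨e i, by simpa using hi⟩

lemma isCPWL2_const (c : ℝ) : IsCPWL2 fun _ => c :=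
  isCPWL2_of_finite continuous_const (fun _ : Unit => AffineMap.const ℝ (ℝ × ℝ) c)
    fun _ => ⟨(), rfl⟩

lemma isCPWL2_fst : IsCPWL2 fun q => q.1 :=
  isCPWL2_of_finite continuous_fst (fun _ : Unit => (LinearMap.fst ℝ ℝ ℝ).toAffineMap)
    fun _ => ⟨(), rfl⟩

lemma isCPWL2_snd : IsCPWL2 fun q => q.2 :=
  isCPWL2_of_finite continuous_snd (fun _ : Unit => (LinearMap.snd ℝ ℝ ℝ).toAffineMap)
    fun _ => ⟨(), rfl⟩

lemma IsCPWL2.add {f g : ℝ × ℝ → ℝ} (hf : IsCPWL2 f) (hg : IsCPWL2 g) :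
    IsCPWL2 fun q => f q + g q := by
  obtain ⟨cf, k, u, hu⟩ := hf
  obtain ⟨cg, l, w, hw⟩ := hg
  refine isCPWL2_of_finite (cf.add cg) (fun i : Fin k × Fin l => u i.1 + w i.2) fun x => ?_
  obtain ⟨i, hi⟩ := hu x
  obtain ⟨j, hj⟩ := hw x
  exact ⟨(i, j), by simp [hi, hj]⟩

lemma IsCPWL2.const_mul {f : ℝ × ℝ → ℝ} (hf : IsCPWL2 f) (c : ℝ) :
    IsCPWL2 fun q => c * f q := by
  obtain ⟨cf, k, u, hu⟩ := hf
  refine isCPWL2_of_finite (cf.const_mul c) (fun i : Fin k => c • u i) fun x => ?_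
  obtain ⟨i, hi⟩ := hu x
  exact ⟨i, by simp [hi]⟩

lemma IsCPWL2.max {f g : ℝ × ℝ → ℝ} (hf : IsCPWL2 f) (hg : IsCPWL2 g) :
    IsCPWL2 fun q => max (f q) (g q) := by
  obtain ⟨cf, k, u, hu⟩ := hf
  obtain ⟨cg, l, w, hw⟩ := hg
  refine isCPWL2_of_finite (Continuous.max cf cg) (Sum.elim u w) fun x => ?_
  obtain ⟨i, hi⟩ := hu x
  obtain ⟨j, hj⟩ := hw x
  rcases max_choice (f x) (g x) with h | h
  · exact ⟨Sum.inl i, h.trans hi⟩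
  · exact ⟨Sum.inr j, h.trans hj⟩

lemma IsCPWL2.min {f g : ℝ × ℝ → ℝ} (hf : IsCPWL2 f) (hg : IsCPWL2 g) :
    IsCPWL2 fun q => min (f q) (g q) := by
  obtain ⟨cf, k, u, hu⟩ := hf
  obtain ⟨cg, l, w, hw⟩ := hg
  refine isCPWL2_of_finite (Continuous.min cf cg) (Sum.elim u w) fun x => ?_
  obtain ⟨i, hi⟩ := hu x
  obtain ⟨j, hj⟩ := hw x
  rcases min_choice (f x) (g x) with h | h
  · exact ⟨Sum.inl i, h.trans hi⟩
  · exact ⟨Sum.inr j, h.trans hj⟩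

lemma isCPWL2_sum (n : ℕ) (F : ℕ → ℝ × ℝ → ℝ) (hF : ∀ i, IsCPWL2 (F i)) :
    IsCPWL2 fun q => ∑ i ∈ Finset.range n, F i q := by
  induction n with
  | zero => simpa using isCPWL2_const 0
  | succ n ih => simpa [Finset.sum_range_succ] using ih.add (hF n)

/-! ### Piecewise linear approximation in one variable -/

/-- The piecewise linear function on the line with value `c` at `0` and slope `s i` on the `i`-th
cell `[i d, (i+1) d]`, for `i < N`; it is constant outside `[0, N d]` (for `d ≥ 0`). -/
noncomputable def plFun (c d : ℝ) (s : ℕ → ℝ) (N : ℕ) (y : ℝ) : ℝ :=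
  c + ∑ i ∈ Finset.range N, s i * min (max (y - i * d) 0) d

lemma plFun_cpwl (c d : ℝ) (s : ℕ → ℝ) (N : ℕ) : IsCPWL2 fun q => plFun c d s N q.2 := by
  refine (isCPWL2_const c).add (isCPWL2_sum N _ fun i => IsCPWL2.const_mul ?_ (s i))
  refine IsCPWL2.min (IsCPWL2.max ?_ (isCPWL2_const 0)) (isCPWL2_const d)
  simpa [sub_eq_add_neg] using isCPWL2_snd.add (isCPWL2_const (-(i * d)))

lemma plFun_bounded (c d : ℝ) (hd : 0 ≤ d) (s : ℕ → ℝ) (N : ℕ) :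
    ∃ M > 0, ∀ y, |plFun c d s N y| ≤ M := by
  refine ⟨|c| + ∑ i ∈ Finset.range N, |s i| * d + 1, by positivity, fun y => ?_⟩
  have h : |∑ i ∈ Finset.range N, s i * min (max (y - i * d) 0) d|
      ≤ ∑ i ∈ Finset.range N, |s i| * d := by
    refine (Finset.abs_sum_le_sum_abs _ _).trans (Finset.sum_le_sum fun i _ => ?_)
    rw [abs_mul, abs_of_nonneg (a := min _ _) (le_min (le_max_right _ _) hd)]
    exact mul_le_mul_of_nonneg_left (min_le_right _ _) (abs_nonneg _)
  unfold plFun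
  linarith [abs_add_le c (∑ i ∈ Finset.range N, s i * min (max (y - i * d) 0) d)]

lemma plFun_lipschitz (c d : ℝ) (s : ℕ → ℝ) (N : ℕ) :
    ∃ L : NNReal, LipschitzWith L (plFun c d s N) := by
  refine ⟨(∑ i ∈ Finset.range N, |s i|).toNNReal, LipschitzWith.of_dist_le_mul fun y z => ?_⟩
  rw [Real.coe_toNNReal _ (Finset.sum_nonneg fun _ _ => abs_nonneg _), Real.dist_eq, Real.dist_eq]
  unfold plFun
  rw [add_sub_add_left_eq_sub, ← Finset.sum_sub_distrib, Finset.sum_mul]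
  refine (Finset.abs_sum_le_sum_abs _ _).trans (Finset.sum_le_sum fun i _ => ?_)
  rw [← mul_sub, abs_mul]
  refine mul_le_mul_of_nonneg_left ?_ (abs_nonneg _)
  have h1 := abs_min_sub_min_le_max (max (y - i * d) 0) d (max (z - i * d) 0) d
  have h2 := abs_max_sub_max_le_max (y - i * d) 0 (z - i * d) 0
  simp only [sub_self, abs_zero, sub_sub_sub_cancel_right] at h1 h2
  exact h1.trans (max_le (h2.trans (max_le le_rfl (abs_nonneg _))) (abs_nonneg _))

lemma plFun_cell (c d : ℝ) (hd : 0 ≤ d) (s : ℕ → ℝ) (N j : ℕ) (hj : j < N) (y : ℝ)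
    (h1 : j * d ≤ y) (h2 : y ≤ (j + 1) * d) :
    plFun c d s N y = c + ∑ i ∈ Finset.range j, s i * d + s j * (y - j * d) := by
  unfold plFun
  obtain ⟨m, rfl⟩ : ∃ m, N = (j + 1) + m := ⟨N - (j + 1), by omega⟩
  rw [Finset.sum_range_add, Finset.sum_range_succ]
  have e1 : ∀ i ∈ Finset.range j, s i * min (max (y - i * d) 0) d = s i * d := by
    intro i hi
    have : (i : ℝ) + 1 ≤ j := by exact_mod_cast Finset.mem_range.1 hi
    have : d ≤ y - i * d := by nlinarith
    rw [min_eq_right (this.trans (le_max_left _ _))]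
  have e2 : ∀ i ∈ Finset.range m,
      s (j + 1 + i) * min (max (y - ((j + 1 + i : ℕ) : ℝ) * d) 0) d = 0 := by
    intro i _
    have : (0 : ℝ) ≤ i * d := by positivity
    have : y - ((j + 1 + i : ℕ) : ℝ) * d ≤ 0 := by push_cast; nlinarith
    rw [max_eq_right this, min_eq_left hd, mul_zero]
  rw [Finset.sum_congr rfl e1, Finset.sum_eq_zero e2, max_eq_left (by linarith),
    min_eq_left (by linarith)]
  ring

/-- A `C¹` function on `[0,1]` is approximated, together with its derivative, by a bounded Lipschitz
piecewise linear function, the derivative estimate holding off a countable set of nodes. -/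
lemma exists_pl_approx (a a' : ℝ → ℝ)
    (ha : ∀ y ∈ Set.Icc (0:ℝ) 1, HasDerivWithinAt a (a' y) (Set.Icc 0 1) y)
    (ha' : ContinuousOn a' (Set.Icc 0 1)) (η : ℝ) (hη : 0 < η) :
    ∃ f : ℝ → ℝ, IsCPWL2 (fun q => f q.2) ∧ (∃ M > 0, ∀ y, |f y| ≤ M) ∧
      (∃ L : NNReal, LipschitzWith L f) ∧ (∀ y ∈ Set.Icc (0:ℝ) 1, |a y - f y| ≤ η) ∧
      ∃ S : Set ℝ, S.Countable ∧
        ∀ y ∈ Set.Ioo (0:ℝ) 1, y ∉ S → |a' y - deriv f y| ≤ η := by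
  have huc := isCompact_Icc.uniformContinuousOn_of_continuous ha'
  obtain ⟨r, hr, huc⟩ := Metric.uniformContinuousOn_iff.1 huc η hη
  obtain ⟨n, hn⟩ := exists_nat_one_div_lt hr
  set N := n + 1 with hN
  set d : ℝ := 1 / ((n : ℝ) + 1) with hd
  have hd0 : 0 < d := by positivity
  have hNd : (N : ℝ) * d = 1 := by rw [hN, hd]; push_cast; field_simp
  set s : ℕ → ℝ := fun i => a' (i * d) with hs
  have hcell : ∀ y ∈ Set.Ico (0:ℝ) 1, ∃ j < N, (j : ℝ) * d ≤ y ∧ y < (j + 1) * d ∧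
      |s j - a' y| ≤ η := by
    intro y hy
    have hj1 : (⌊y / d⌋₊ : ℝ) * d ≤ y := by
      have := Nat.floor_le (div_nonneg hy.1 hd0.le)
      rwa [le_div_iff₀ hd0] at this
    have hj2 : y < (⌊y / d⌋₊ + 1) * d := by
      have := Nat.lt_floor_add_one (y / d)
      rwa [div_lt_iff₀ hd0] at this
    refine ⟨⌊y / d⌋₊, ?_, hj1, hj2, ?_⟩
    · have : (⌊y / d⌋₊ : ℝ) * d < N * d := by rw [hNd]; exact hj1.trans_lt hy.2
      exact_mod_cast lt_of_mul_lt_mul_right this hd0.le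
    · have h := huc (⌊y / d⌋₊ * d) ⟨by positivity, hj1.trans hy.2.le⟩ y ⟨hy.1, hy.2.le⟩ (by
        rw [Real.dist_eq, abs_lt]; constructor <;> linarith)
      rw [Real.dist_eq] at h
      exact h.le
  obtain ⟨M, hM⟩ := plFun_bounded (a 0) d hd0.le s N
  obtain ⟨L, hL⟩ := plFun_lipschitz (a 0) d s N
  refine ⟨plFun (a 0) d s N, plFun_cpwl _ _ _ _, ⟨M, hM⟩, ⟨L, hL⟩, ?_,
    Set.range fun i : ℕ => (i : ℝ) * d, Set.countable_range _, ?_⟩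
  · choose! j hjN hj1 hj2 hj3 using hcell
    have hac : ContinuousOn a (Set.Icc 0 1) := fun y hy => (ha y hy).continuousWithinAt
    have hder : ∀ y ∈ Set.Ico (0:ℝ) 1, HasDerivWithinAt (fun t => plFun (a 0) d s N t - a t)
        (s (j y) - a' y) (Set.Ici y) y := by
      intro y hy
      refine HasDerivWithinAt.sub ?_ ?_
      · have h0 : HasDerivWithinAt (fun t => a 0 + ∑ i ∈ Finset.range (j y), s i * d
            + s (j y) * (t - j y * d)) (s (j y)) (Set.Ici y) y := by
          simpa using (((hasDerivAt_id y).sub_const (j y * d)).const_mul (s (j y))).const_add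
            (a 0 + ∑ i ∈ Finset.range (j y), s i * d) |>.hasDerivWithinAt (s := Set.Ici y)
        refine h0.congr_of_eventuallyEq ?_ (plFun_cell _ _ hd0.le _ _ _ (hjN y hy) _ (hj1 y hy)
          (hj2 y hy).le)
        filter_upwards [Ico_mem_nhdsGE (hj2 y hy)] with t ht
        exact plFun_cell _ _ hd0.le _ _ _ (hjN y hy) _ ((hj1 y hy).trans ht.1) ht.2.le
      · exact (ha y ⟨hy.1, hy.2.le⟩).mono_of_mem_nhdsWithin
          (Filter.mem_of_superset (Icc_mem_nhdsGE hy.2) (Set.Icc_subset_Icc_left hy.1))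
    intro y hy
    -- The mean value inequality with right derivatives, which exist at the nodes as well.
    have h := norm_image_sub_le_of_norm_deriv_right_le_segment
      (hL.continuous.continuousOn.sub hac) hder (fun x hx => hj3 x hx) y hy
    have h00 : plFun (a 0) d s N 0 = a 0 := by
      rw [plFun_cell _ _ hd0.le _ _ 0 (by omega) 0 (by simp) (by simpa using hd0.le)]
      simp
    simp only [Pi.sub_apply, h00, sub_self, sub_zero, Real.norm_eq_abs] at h
    rw [abs_sub_comm]
    exact h.trans (by nlinarith [hy.2])
  · intro y hy hyS
    obtain ⟨j, hjN, hj1, hj2, hj3⟩ := hcell y ⟨hy.1.le, hy.2⟩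
    have hj1' : (j : ℝ) * d < y := lt_of_le_of_ne hj1 fun h => hyS ⟨j, h⟩
    have h0 : HasDerivAt (fun t => a 0 + ∑ i ∈ Finset.range j, s i * d + s j * (t - j * d))
        (s j) y := by
      simpa using (((hasDerivAt_id y).sub_const (j * d)).const_mul (s j)).const_add
        (a 0 + ∑ i ∈ Finset.range j, s i * d)
    have h1 : HasDerivAt (plFun (a 0) d s N) (s j) y := by
      refine h0.congr_of_eventuallyEq ?_
      filter_upwards [Ioo_mem_nhds hj1' hj2] with t ht
      exact plFun_cell _ _ hd0.le _ _ _ hjN _ ht.1.le ht.2.le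
    rw [h1.deriv, abs_sub_comm]
    exact hj3

/-! ### Truncation and the error integral -/

/-- A function that is a.e. at most `u` in absolute value off the strip `x₀ - δ < x < x₀`, and at most `w`
on it, has square integral over the unit square at most `u² + δ w²`. No measurability is required:
a non-integrable square has Bochner integral `0`. -/
lemma integral_sq_le_of_strip (F : ℝ × ℝ → ℝ) (x₀ δ u w : ℝ) (hδ : 0 < δ)
    (h1 : ∀ᵐ q ∂(volume.restrict (Set.Ioo (0:ℝ) 1 ×ˢ Set.Ioo (0:ℝ) 1) : Measure (ℝ × ℝ)),
      q.1 ∉ Set.Ioo (x₀ - δ) x₀ → |F q| ≤ u)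
    (h2 : ∀ᵐ q ∂(volume.restrict (Set.Ioo (0:ℝ) 1 ×ˢ Set.Ioo (0:ℝ) 1) : Measure (ℝ × ℝ)),
      q.1 ∈ Set.Ioo (x₀ - δ) x₀ → |F q| ≤ w) :
    ∫ q in Set.Ioo (0:ℝ) 1 ×ˢ Set.Ioo (0:ℝ) 1, F q ^ 2 ≤ u ^ 2 + δ * w ^ 2 := by
  set μ : Measure (ℝ × ℝ) := volume.restrict (Set.Ioo (0:ℝ) 1 ×ˢ Set.Ioo (0:ℝ) 1) with hμ
  have hvol : μ Set.univ = 1 := by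
    rw [hμ, Measure.restrict_apply_univ, Measure.volume_eq_prod, Measure.prod_prod]
    simp
  have : IsProbabilityMeasure μ := ⟨hvol⟩
  set T : Set (ℝ × ℝ) := Set.Ioo (x₀ - δ) x₀ ×ˢ Set.univ with hT
  have hTm : MeasurableSet T := measurableSet_Ioo.prod MeasurableSet.univ
  have hTδ : μ.real T ≤ δ := by
    have : μ T ≤ ENNReal.ofReal δ := by
      rw [hμ, Measure.restrict_apply hTm, hT, Set.prod_inter_prod, Measure.volume_eq_prod,
        Measure.prod_prod]
      calc _ ≤ volume (Set.Ioo (x₀ - δ) x₀) * volume (Set.Ioo (0:ℝ) 1) :=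
            mul_le_mul' (measure_mono Set.inter_subset_left) (measure_mono Set.inter_subset_right)
        _ = ENNReal.ofReal δ := by simp
    exact ENNReal.toReal_le_of_le_ofReal hδ.le this
  have hint : Integrable (T.indicator fun _ => w ^ 2) μ := (integrable_const _).indicator hTm
  calc ∫ q, F q ^ 2 ∂μ ≤ ∫ q, (u ^ 2 + T.indicator (fun _ => w ^ 2) q) ∂μ := by
        refine integral_mono_of_nonneg (Filter.Eventually.of_forall fun q => sq_nonneg _)
          ((integrable_const _).add hint) ?_
        filter_upwards [h1, h2] with q hq1 hq2
        by_cases hq : q.1 ∈ Set.Ioo (x₀ - δ) x₀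
        · have hqT : q ∈ T := ⟨hq, trivial⟩
          rw [Set.indicator_of_mem hqT]
          have := sq_le_sq' (abs_le.1 (hq2 hq)).1 (abs_le.1 (hq2 hq)).2
          nlinarith [sq_nonneg u]
        · have hqT : q ∉ T := fun h => hq h.1
          rw [Set.indicator_of_notMem hqT, add_zero]
          exact sq_le_sq' (abs_le.1 (hq1 hq)).1 (abs_le.1 (hq1 hq)).2
    _ = u ^ 2 + μ.real T * w ^ 2 := by
        rw [integral_add (integrable_const _) hint, integral_indicator_const _ hTm]
        simp
    _ ≤ u ^ 2 + δ * w ^ 2 := by gcongr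

lemma abs_truncate_sub_le (h s t : ℝ) :
    |max (-h) (min h s) - max (-h) (min h t)| ≤ |s - t| := by
  have h1 := abs_min_sub_min_le_max h s h t
  have h2 := abs_max_sub_max_le_max (-h) (min h s) (-h) (min h t)
  simp only [sub_self, abs_zero] at h1 h2
  exact h2.trans (max_le (abs_nonneg _) (h1.trans (max_le (abs_nonneg _) le_rfl)))

/-- Theorem 3.1 (ε-formulation): the discontinuous function `χ(x,y) = a(y)·𝟙[x < x₀]`
with continuously differentiable jump `a`, together with its directional derivative
`χ_β = v₂·a′·𝟙[x < x₀]` along `β = (0, v₂)`, can be approximated in the graph norm on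
`Υ = (0,1)²` to any accuracy `ε` by a CPWL function. -/
theorem cpwl_approx_cylindrical_jump (x₀ B : ℝ) (hx₀ : x₀ ∈ Set.Ioo (0:ℝ) 1) (hB : 0 < B)
    (a a' : ℝ → ℝ)
    (ha : ∀ y ∈ Set.Icc (0:ℝ) 1, HasDerivWithinAt a (a' y) (Set.Icc 0 1) y)
    (ha' : ContinuousOn a' (Set.Icc 0 1))
    (v₂ : ℝ → ℝ → ℝ)
    (hv₂m : Measurable fun q : ℝ × ℝ => v₂ q.1 q.2)
    (hv₂B : ∀ x y : ℝ, |v₂ x y| ≤ B)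
    (χ χβ : ℝ → ℝ → ℝ)
    (hχ₁ : ∀ x y : ℝ, x < x₀ → χ x y = a y)
    (hχ₂ : ∀ x y : ℝ, x₀ ≤ x → χ x y = 0)
    (hχβ₁ : ∀ x y : ℝ, x < x₀ → χβ x y = v₂ x y * a' y)
    (hχβ₂ : ∀ x y : ℝ, x₀ ≤ x → χβ x y = 0) :
    ∀ ε > (0:ℝ), ∃ p : ℝ × ℝ → ℝ, IsCPWL2 p ∧
      Real.sqrt ((∫ q in Set.Ioo (0:ℝ) 1 ×ˢ Set.Ioo (0:ℝ) 1, (χ q.1 q.2 - p q) ^ 2) +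
          ∫ q in Set.Ioo (0:ℝ) 1 ×ˢ Set.Ioo (0:ℝ) 1,
            (χβ q.1 q.2 - v₂ q.1 q.2 * deriv (fun t => p (q.1, t)) q.2) ^ 2) ≤ ε := by
  intro ε hε
  set η : ℝ := ε / (2 * (1 + B)) with hη
  have hη0 : 0 < η := by positivity
  obtain ⟨f, hfc, ⟨M, hM0, hM⟩, ⟨L, hL⟩, hfa, S, hS, hfd⟩ := exists_pl_approx a a' ha ha' η hη0
  have hac : ContinuousOn a (Set.Icc 0 1) := fun y hy => (ha y hy).continuousWithinAt
  obtain ⟨A, hA⟩ := isCompact_Icc.exists_bound_of_continuousOn hac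
  obtain ⟨A', hA'⟩ := isCompact_Icc.exists_bound_of_continuousOn ha'
  simp only [Real.norm_eq_abs] at hA hA'
  set D : ℝ := (A + M) ^ 2 + (B * (A' + L)) ^ 2 + 1 with hD
  have hD0 : 0 < D := by positivity
  set δ : ℝ := ε ^ 2 / (2 * D) with hδ
  have hδ0 : 0 < δ := by positivity
  -- `h` is a ramp vanishing for `x ≥ x₀` and at least `M` for `x ≤ x₀ - δ`.
  set h : ℝ → ℝ := fun x => max 0 (M / δ * (x₀ - x)) with hh
  have hh0 : ∀ x, 0 ≤ h x := fun x => le_max_left _ _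
  have hhr : ∀ x, x₀ ≤ x → h x = 0 := fun x hx =>
    max_eq_left (mul_nonpos_of_nonneg_of_nonpos (by positivity) (by linarith))
  have hhl : ∀ x, x ≤ x₀ - δ → M ≤ h x := fun x hx => by
    refine le_trans ?_ (le_max_right _ _)
    calc M = M / δ * δ := by field_simp
      _ ≤ M / δ * (x₀ - x) := by gcongr; linarith
  set p : ℝ × ℝ → ℝ := fun q => max (-h q.1) (min (h q.1) (f q.2)) with hp
  have hpl : ∀ x t, x ≤ x₀ - δ → p (x, t) = f t := fun x t hx => by
    have h1 := abs_le.1 (hM t)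
    have h2 := hhl x hx
    simp only [hp]
    rw [min_eq_right (by linarith), max_eq_right (by linarith)]
  have hpr : ∀ x t, x₀ ≤ x → p (x, t) = 0 := fun x t hx => by
    simp [hp, hhr x hx]
  have hpM : ∀ q, |p q| ≤ M := fun q => by
    have h0 := hh0 q.1
    have := abs_truncate_sub_le (h q.1) (f q.2) 0
    rw [min_eq_right h0, max_eq_right (a := -h q.1) (b := 0) (by linarith), sub_zero,
      sub_zero] at this
    exact this.trans (hM q.2)
  have hpd : ∀ x y, |deriv (fun t => p (x, t)) y| ≤ L := fun x y => by
    rw [← Real.norm_eq_abs]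
    refine norm_deriv_le_of_lipschitz (LipschitzWith.of_dist_le_mul fun s t => ?_)
    exact (abs_truncate_sub_le (h x) (f s) (f t)).trans (hL.dist_le_mul s t)
  have hpc : IsCPWL2 p := by
    have h1 : IsCPWL2 fun q => h q.1 := by
      refine (isCPWL2_const 0).max (IsCPWL2.const_mul ?_ _)
      simpa [sub_eq_add_neg] using (isCPWL2_const x₀).add (isCPWL2_fst.const_mul (-1))
    have h2 : IsCPWL2 fun q => -h q.1 := by simpa using h1.const_mul (-1)
    exact h2.max (h1.min hfc)
  refine ⟨p, hpc, ?_⟩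
  have hmem : ∀ᵐ q ∂(volume.restrict (Set.Ioo (0:ℝ) 1 ×ˢ Set.Ioo (0:ℝ) 1) : Measure (ℝ × ℝ)),
      q ∈ Set.Ioo (0:ℝ) 1 ×ˢ Set.Ioo (0:ℝ) 1 :=
    ae_restrict_mem (measurableSet_Ioo.prod measurableSet_Ioo)
  have hnode : ∀ᵐ q ∂(volume.restrict (Set.Ioo (0:ℝ) 1 ×ˢ Set.Ioo (0:ℝ) 1) : Measure (ℝ × ℝ)),
      q.2 ∉ S :=
    ae_restrict_of_ae (Measure.quasiMeasurePreserving_snd.ae (hS.ae_notMem volume))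
  have I1 : ∫ q in Set.Ioo (0:ℝ) 1 ×ˢ Set.Ioo (0:ℝ) 1, (χ q.1 q.2 - p q) ^ 2
      ≤ η ^ 2 + δ * (A + M) ^ 2 := by
    refine integral_sq_le_of_strip _ x₀ δ _ _ hδ0 ?_ ?_
    · filter_upwards [hmem] with ⟨x, y⟩ ⟨hx, hy⟩ hq
      by_cases hx0 : x₀ ≤ x
      · simpa [hχ₂ x y hx0, hpr x y hx0] using hη0.le
      · have hxδ : x ≤ x₀ - δ := not_lt.1 fun h => hq ⟨h, not_le.1 hx0⟩
        simpa [hχ₁ x y (not_le.1 hx0), hpl x y hxδ] using hfa y (Set.Ioo_subset_Icc_self hy)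
    · filter_upwards [hmem] with ⟨x, y⟩ ⟨hx, hy⟩ hq
      have h1 := hA y (Set.Ioo_subset_Icc_self hy)
      have h2 := hpM (x, y)
      simp only [hχ₁ x y hq.2]
      exact (abs_sub _ _).trans (add_le_add h1 h2)
  have I2 : ∫ q in Set.Ioo (0:ℝ) 1 ×ˢ Set.Ioo (0:ℝ) 1,
        (χβ q.1 q.2 - v₂ q.1 q.2 * deriv (fun t => p (q.1, t)) q.2) ^ 2
      ≤ (B * η) ^ 2 + δ * (B * (A' + L)) ^ 2 := by
    refine integral_sq_le_of_strip _ x₀ δ _ _ hδ0 ?_ ?_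
    · filter_upwards [hmem, hnode] with ⟨x, y⟩ ⟨hx, hy⟩ hyS hq
      by_cases hx0 : x₀ ≤ x
      · have : (fun t => p (x, t)) = fun _ => 0 := funext fun t => hpr x t hx0
        simp only [hχβ₂ x y hx0, this, deriv_const, mul_zero, sub_zero, abs_zero]
        positivity
      · have hxδ : x ≤ x₀ - δ := not_lt.1 fun h => hq ⟨h, not_le.1 hx0⟩
        have : (fun t => p (x, t)) = f := funext fun t => hpl x t hxδ
        simp only [hχβ₁ x y (not_le.1 hx0), this]
        rw [← mul_sub, abs_mul]
        exact mul_le_mul (hv₂B x y) (hfd y hy hyS) (abs_nonneg _) hB.le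
    · filter_upwards [hmem] with ⟨x, y⟩ ⟨hx, hy⟩ hq
      have h1 := hA' y (Set.Ioo_subset_Icc_self hy)
      simp only [hχβ₁ x y hq.2]
      rw [← mul_sub, abs_mul]
      exact mul_le_mul (hv₂B x y) ((abs_sub _ _).trans (add_le_add h1 (hpd x y)))
        (abs_nonneg _) hB.le
  refine Real.sqrt_le_iff.2 ⟨hε.le, (add_le_add I1 I2).trans ?_⟩
  have e1 : η ^ 2 + (B * η) ^ 2 ≤ ε ^ 2 / 2 := by
    have : ε = 2 * ((1 + B) * η) := by rw [hη]; field_simp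
    rw [this]
    nlinarith [mul_pos hB (pow_pos hη0 2), sq_nonneg η, sq_nonneg (B * η)]
  have e2 : δ * (A + M) ^ 2 + δ * (B * (A' + L)) ^ 2 ≤ ε ^ 2 / 2 := by
    calc _ ≤ δ * D := by rw [hD]; nlinarith
      _ = ε ^ 2 / 2 := by rw [hδ]; field_simp
  linarith
end
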